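/- arXiv:1904.05907 — 7 statements merged into one kernel-verified Lean document; each statement's English description precedes it below -/
import Mathlib

section
/- As p → ∞ one has u_p(0) → √e and ρ_p → 0. -/
open Real Set Filter MeasureTheory

/-- Abstract first-order form of the radial problem (q is minus r times the derivative of u). -/
structure HData (β p : ℝ) (u q : ℝ → ℝ) : Prop where
  hβ : 2 ≤ β
  hp : 1 < p
  cu : ContinuousOn u (Icc 0 1)
  cq : ContinuousOn q (Icc 0 1)
  du : ∀ r ∈ Ioo (0:ℝ) 1, HasDerivAt u (-(q r / r)) r
  dq : ∀ r ∈ Ioo (0:ℝ) 1, HasDerivAt q (r ^ (β - 1) * u r ^ p) r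
  q0 : q 0 = 0
  u1 : u 1 = 0
  pos : ∀ r ∈ Ico (0:ℝ) 1, 0 < u r

lemma mono_of_deriv {f f' : ℝ → ℝ} {a b : ℝ} (hc : ContinuousOn f (Icc a b))
    (hd : ∀ r ∈ Ioo a b, HasDerivAt f (f' r) r) (h0 : ∀ r ∈ Ioo a b, 0 ≤ f' r) :
    MonotoneOn f (Icc a b) := by
  apply monotoneOn_of_deriv_nonneg (convex_Icc a b) hc
  · intro r hr
    rw [interior_Icc] at hr
    exact (hd r hr).differentiableAt.differentiableWithinAt
  · intro r hr
    rw [interior_Icc] at hr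
    rw [(hd r hr).deriv]
    exact h0 r hr

namespace HData
variable {β p : ℝ} {u q : ℝ → ℝ}

lemma unonneg (h : HData β p u q) {r : ℝ} (hr : r ∈ Icc (0:ℝ) 1) : 0 ≤ u r := by
  rcases eq_or_lt_of_le hr.2 with h1 | h1
  · rw [h1, h.u1]
  · exact (h.pos r ⟨hr.1, h1⟩).le

lemma qmono (h : HData β p u q) : MonotoneOn q (Icc 0 1) := by
  apply mono_of_deriv h.cq h.dq
  intro r hr
  have := h.pos r ⟨hr.1.le, hr.2⟩
  have := hr.1
  positivity

lemma qnonneg (h : HData β p u q) {r : ℝ} (hr : r ∈ Icc (0:ℝ) 1) : 0 ≤ q r := by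
  have := h.qmono (by simp) hr hr.1
  rwa [h.q0] at this

lemma uanti (h : HData β p u q) {r s : ℝ} (hr : r ∈ Icc (0:ℝ) 1) (hs : s ∈ Icc (0:ℝ) 1)
    (hrs : r ≤ s) : u s ≤ u r := by
  have : MonotoneOn (fun r => - u r) (Icc 0 1) := by
    apply mono_of_deriv h.cu.neg (fun r hr => (h.du r hr).neg)
    intro r hr
    have := h.qnonneg ⟨hr.1.le, hr.2.le⟩
    have := hr.1
    rw [neg_neg]
    positivity
  have := this hr hs hrs
  simp only at this
  linarith

lemma drpow {b r : ℝ} (hr : 0 < r) : HasDerivAt (fun s : ℝ => s ^ b) (b * r ^ (b - 1)) r :=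
  Real.hasDerivAt_rpow_const (Or.inl hr.ne')

lemma crpow {b : ℝ} (hb : 0 ≤ b) {s : Set ℝ} : ContinuousOn (fun s : ℝ => s ^ b) s :=
  (Real.continuous_rpow_const hb).continuousOn

lemma qupper (h : HData β p u q) {r : ℝ} (hr : r ∈ Icc (0:ℝ) 1) :
    q r ≤ u 0 ^ p / β * r ^ β := by
  have hβ := h.hβ
  have hm : MonotoneOn (fun r => u 0 ^ p / β * r ^ β - q r) (Icc 0 1) := by
    apply mono_of_deriv ((continuousOn_const.mul (crpow (by linarith))).sub h.cq)
      (fun r hr => ((drpow hr.1).const_mul _).sub (h.dq r hr))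
    intro r hr
    have h1 : u r ≤ u 0 := h.uanti (by simp) ⟨hr.1.le, hr.2.le⟩ hr.1.le
    have h2 : u r ^ p ≤ u 0 ^ p :=
      Real.rpow_le_rpow (h.unonneg ⟨hr.1.le, hr.2.le⟩) h1 (by linarith [h.hp])
    have h3 : 0 ≤ r ^ (β - 1) := Real.rpow_nonneg hr.1.le _
    have h4 : u 0 ^ p / β * (β * r ^ (β - 1)) - r ^ (β - 1) * u r ^ p
      = r ^ (β - 1) * (u 0 ^ p - u r ^ p) := by
      field_simp
    rw [h4]
    exact mul_nonneg h3 (by linarith)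
  have := hm (by simp) hr hr.1
  simp only [h.q0, Real.zero_rpow (show β ≠ 0 by linarith)] at this
  linarith

lemma ulower (h : HData β p u q) {r : ℝ} (hr : r ∈ Icc (0:ℝ) 1) :
    u 0 - u 0 ^ p / β ^ 2 * r ^ β ≤ u r := by
  have hβ := h.hβ
  have hm : MonotoneOn (fun r => u r + u 0 ^ p / β ^ 2 * r ^ β) (Icc 0 1) := by
    apply mono_of_deriv (h.cu.add (continuousOn_const.mul (crpow (by linarith))))
      (fun r hr => (h.du r hr).add ((drpow hr.1).const_mul _))
    intro r hr
    have h1 := h.qupper ⟨hr.1.le, hr.2.le⟩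
    have hr0 := hr.1
    have h4 : u 0 ^ p / β ^ 2 * (β * r ^ (β - 1)) = (u 0 ^ p / β * r ^ β) / r := by
      rw [Real.rpow_sub_one hr0.ne']
      field_simp
    rw [h4]
    have : q r / r ≤ (u 0 ^ p / β * r ^ β) / r := by gcongr
    linarith
  have := hm (by simp) hr hr.1
  simp only [Real.zero_rpow (show β ≠ 0 by linarith)] at this
  linarith

lemma qlower (h : HData β p u q) {r : ℝ} (hr : r ∈ Ioo (0:ℝ) 1) :
    u r ^ p / β * r ^ β ≤ q r := by
  have hβ := h.hβ
  have hsub : Icc 0 r ⊆ Icc (0:ℝ) 1 := Icc_subset_Icc_right hr.2.le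
  have hm : MonotoneOn (fun s => q s - u r ^ p / β * s ^ β) (Icc 0 r) := by
    apply mono_of_deriv ((h.cq.mono hsub).sub (continuousOn_const.mul (crpow (by linarith))))
      (fun s hs => (h.dq s ⟨hs.1, hs.2.trans hr.2⟩).sub ((drpow hs.1).const_mul _))
    intro s hs
    have h1 : u r ≤ u s := h.uanti ⟨hs.1.le, (hs.2.trans hr.2).le⟩ ⟨hr.1.le, hr.2.le⟩ hs.2.le
    have h2 : u r ^ p ≤ u s ^ p :=
      Real.rpow_le_rpow (h.unonneg ⟨hr.1.le, hr.2.le⟩) h1 (by linarith [h.hp])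
    have h3 : 0 ≤ s ^ (β - 1) := Real.rpow_nonneg hs.1.le _
    have h4 : s ^ (β - 1) * u s ^ p - u r ^ p / β * (β * s ^ (β - 1))
      = s ^ (β - 1) * (u s ^ p - u r ^ p) := by
      field_simp
    rw [h4]
    exact mul_nonneg h3 (by linarith)
  have := hm ⟨le_rfl, hr.1.le⟩ ⟨hr.1.le, le_rfl⟩ hr.1.le
  simp only [h.q0, Real.zero_rpow (show β ≠ 0 by linarith)] at this
  linarith

/-- tangent line inequality (concavity in `log r`) -/
lemma tangent (h : HData β p u q) {a b : ℝ} (ha : a ∈ Ioc (0:ℝ) 1) (hb : b ∈ Ioc (0:ℝ) 1) :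
    u b ≤ u a - q a * (Real.log b - Real.log a) := by
  have clog : ∀ {x y : ℝ}, 0 < x → ContinuousOn Real.log (Icc x y) := fun hx =>
    Real.continuousOn_log.mono (fun z hz => (lt_of_lt_of_le hx hz.1).ne')
  have dlog : ∀ {x : ℝ}, 0 < x → HasDerivAt Real.log x⁻¹ x := fun hx =>
    Real.hasDerivAt_log hx.ne'
  rcases le_total a b with hab | hab
  · have hm : MonotoneOn (fun r => -(q a * Real.log r) - u r) (Icc a b) := by
      apply mono_of_deriv (((continuousOn_const.mul (clog ha.1)).neg).sub
        (h.cu.mono (Icc_subset_Icc ha.1.le hb.2)))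
        (fun r hr => ((((dlog (ha.1.trans hr.1)).const_mul _).neg).sub
          (h.du r ⟨ha.1.trans hr.1, lt_of_lt_of_le hr.2 hb.2⟩)))
      intro r hr
      have hr0 : 0 < r := ha.1.trans hr.1
      have h1 : q a ≤ q r := h.qmono ⟨ha.1.le, ha.2⟩ ⟨hr0.le, hr.2.le.trans hb.2⟩ hr.1.le
      have h2 : -(q a * r⁻¹) - -(q r / r) = (q r - q a) / r := by ring
      rw [h2]
      exact div_nonneg (by linarith) hr0.le
    have := hm ⟨le_rfl, hab⟩ ⟨hab, le_rfl⟩ hab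
    simp only at this
    linarith
  · have hm : MonotoneOn (fun r => q a * Real.log r + u r) (Icc b a) := by
      apply mono_of_deriv (((continuousOn_const.mul (clog hb.1))).add
        (h.cu.mono (Icc_subset_Icc hb.1.le ha.2)))
        (fun r hr => ((((dlog (hb.1.trans hr.1)).const_mul _)).add
          (h.du r ⟨hb.1.trans hr.1, lt_of_lt_of_le hr.2 ha.2⟩)))
      intro r hr
      have hr0 : 0 < r := hb.1.trans hr.1
      have h1 : q r ≤ q a := h.qmono ⟨hr0.le, hr.2.le.trans ha.2⟩ ⟨ha.1.le, ha.2⟩ hr.2.le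
      have h2 : (q a * r⁻¹) + -(q r / r) = (q a - q r) / r := by ring
      rw [h2]
      exact div_nonneg (by linarith) hr0.le
    have := hm ⟨le_rfl, hab⟩ ⟨hab, le_rfl⟩ hab
    simp only at this
    linarith

/-- Pohozaev functional (times `p+1`) -/
noncomputable def G (β p : ℝ) (u q : ℝ → ℝ) (r : ℝ) : ℝ :=
  (p + 1) / 2 * q r ^ 2 + r ^ β * u r ^ (p + 1) - β * (u r * q r)

lemma Gcont (h : HData β p u q) : ContinuousOn (G β p u q) (Icc 0 1) := by
  have hβ := h.hβ
  have hp := h.hp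
  unfold G
  refine ((continuousOn_const.mul (h.cq.pow 2)).add ((crpow (by linarith)).mul
    (h.cu.rpow_const (fun x _ => Or.inr (by linarith))))).sub
    (continuousOn_const.mul (h.cu.mul h.cq))

lemma Gderiv (h : HData β p u q) {r : ℝ} (hr : r ∈ Ioo (0:ℝ) 1) :
    HasDerivAt (G β p u q) (β * q r ^ 2 / r) r := by
  have hu := h.pos r ⟨hr.1.le, hr.2⟩
  have hr0 := hr.1
  have h1 := (((h.dq r hr).pow 2).const_mul ((p+1)/2)).add ((drpow (b := β) hr.1).mul
    ((h.du r hr).rpow_const (p := p + 1) (Or.inl hu.ne'))) |>.sub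
    (((h.du r hr).mul (h.dq r hr)).const_mul β)
  refine h1.congr_deriv ?_
  rw [Real.rpow_sub_one hr0.ne', add_sub_cancel_right, Real.rpow_add_one hu.ne']
  field_simp
  ring

lemma G0 (h : HData β p u q) : G β p u q 0 = 0 := by
  have hβ := h.hβ
  simp [G, h.q0, Real.zero_rpow (show β ≠ 0 by linarith)]

lemma Gnonneg (h : HData β p u q) {r : ℝ} (hr : r ∈ Icc (0:ℝ) 1) : 0 ≤ G β p u q r := by
  have hβ := h.hβ
  have hm : MonotoneOn (G β p u q) (Icc 0 1) := by
    apply mono_of_deriv h.Gcont (fun r hr => h.Gderiv hr)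
    intro r hr
    have := hr.1
    positivity
  have := hm (by simp) hr hr.1
  rwa [h.G0] at this

lemma pohozaev (h : HData β p u q) : q 1 * (p + 1) ≤ 2 * β * u 0 := by
  have hβ := h.hβ
  have hp := h.hp
  have hm : MonotoneOn (fun r => β * q 1 * (- u r) - G β p u q r) (Icc 0 1) := by
    apply mono_of_deriv ((continuousOn_const.mul h.cu.neg).sub h.Gcont)
      (fun r hr => (((h.du r hr).neg).const_mul _).sub (h.Gderiv hr))
    intro r hr
    have hr0 := hr.1
    have h1 : q r ≤ q 1 := h.qmono ⟨hr.1.le, hr.2.le⟩ (by simp) hr.2.le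
    have h2 : 0 ≤ q r := h.qnonneg ⟨hr.1.le, hr.2.le⟩
    have h3 : β * q 1 * (- -(q r / r)) - β * q r ^ 2 / r = β * (q r * (q 1 - q r)) / r := by ring
    rw [h3]
    have : 0 ≤ q 1 - q r := by linarith
    positivity
  have h1 := hm (by simp) (by simp : (1:ℝ) ∈ Icc (0:ℝ) 1) zero_le_one
  simp only [h.G0] at h1
  have h2 : G β p u q 1 = (p + 1) / 2 * q 1 ^ 2 := by
    simp [G, h.u1, Real.zero_rpow (show p + 1 ≠ 0 by linarith)]
  rw [h2, h.u1] at h1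
  have hq : 0 ≤ q 1 := h.qnonneg (by simp)
  rcases eq_or_lt_of_le hq with h0 | h0
  · rw [← h0]
    have := h.pos 0 (by simp)
    have : 0 ≤ 2 * β * u 0 := by positivity
    linarith
  · have : q 1 * (q 1 * (p + 1)) ≤ q 1 * (2 * β * u 0) := by nlinarith
    exact le_of_mul_le_mul_left this h0

noncomputable def K (β p : ℝ) (u q : ℝ → ℝ) (r : ℝ) : ℝ :=
  q r * r ^ (-β) * u r ^ (-((p + 1) / 2))

lemma Kderiv (h : HData β p u q) {r : ℝ} (hr : r ∈ Ioo (0:ℝ) 1) :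
    HasDerivAt (K β p u q)
      (r ^ (-β - 1) * u r ^ (-((p + 1) / 2) - 1) * G β p u q r) r := by
  have hu := h.pos r ⟨hr.1.le, hr.2⟩
  have hr0 := hr.1
  have h1 := (((h.dq r hr).mul (drpow (b := -β) hr.1)).mul
    ((h.du r hr).rpow_const (p := -((p + 1) / 2)) (Or.inl hu.ne')))
  refine h1.congr_deriv ?_
  simp only [G]
  rw [Real.rpow_sub_one hr0.ne', Real.rpow_sub_one hr0.ne', Real.rpow_sub_one hu.ne',
    Real.rpow_add_one hu.ne']
  simp only [Pi.mul_apply]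
  field_simp
  ring

lemma Kmono (h : HData β p u q) {a b : ℝ} (ha : 0 < a) (hab : a ≤ b) (hb : b < 1) :
    K β p u q a ≤ K β p u q b := by
  have hd : ∀ r ∈ Icc a b, r ∈ Ioo (0:ℝ) 1 := fun r hr =>
    ⟨lt_of_lt_of_le ha hr.1, lt_of_le_of_lt hr.2 hb⟩
  have hm : MonotoneOn (K β p u q) (Icc a b) := by
    apply mono_of_deriv (fun r hr => (h.Kderiv (hd r hr)).continuousAt.continuousWithinAt)
      (fun r hr => h.Kderiv (hd r ⟨hr.1.le, hr.2.le⟩))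
    intro r hr
    have hr' := hd r ⟨hr.1.le, hr.2.le⟩
    have h1 := h.Gnonneg ⟨hr'.1.le, hr'.2.le⟩
    have hu := h.pos r ⟨hr'.1.le, hr'.2⟩
    have := hr'.1
    positivity
  exact hm ⟨le_rfl, hab⟩ ⟨hab, le_rfl⟩ hab

lemma Klower (h : HData β p u q) {r : ℝ} (hr : r ∈ Ioo (0:ℝ) 1) :
    u 0 ^ ((p - 1) / 2) / β ≤ K β p u q r := by
  have hβ := h.hβ
  have hp := h.hp
  have hc : ContinuousWithinAt u (Ioo 0 1) 0 :=
    (h.cu 0 (by simp)).mono Ioo_subset_Icc_self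
  have ht : Tendsto (fun s => u s ^ ((p - 1) / 2) / β) (nhdsWithin 0 (Ioo 0 1))
      (nhds (u 0 ^ ((p - 1) / 2) / β)) :=
    (hc.tendsto.rpow_const (Or.inr (by linarith))).div_const β
  have : (nhdsWithin (0:ℝ) (Ioo 0 1)).NeBot := by
    rw [← mem_closure_iff_nhdsWithin_neBot, closure_Ioo (by norm_num)]
    simp
  refine le_of_tendsto ht ?_
  have h1 : ∀ᶠ s in nhdsWithin (0:ℝ) (Ioo 0 1), s ∈ Ioo (0:ℝ) 1 := self_mem_nhdsWithin
  have h2 : ∀ᶠ s in nhdsWithin (0:ℝ) (Ioo 0 1), s < r :=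
    mem_nhdsWithin_of_mem_nhds (Iio_mem_nhds hr.1)
  filter_upwards [h1, h2] with s hs hsr
  refine le_trans ?_ (h.Kmono hs.1 hsr.le hr.2)
  have hu := h.pos s ⟨hs.1.le, hs.2⟩
  have hs0 := hs.1
  have h3 := h.qlower hs
  have h4 : u s ^ ((p - 1) / 2) = u s ^ p * u s ^ (-((p + 1) / 2)) := by
    rw [← Real.rpow_add hu]
    congr 1
    ring
  have h5 : s ^ β * s ^ (-β) = 1 := by
    rw [← Real.rpow_add hs0]
    simp
  have h6 : u s ^ ((p - 1) / 2) / β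
      = (u s ^ p / β * s ^ β) * s ^ (-β) * u s ^ (-((p + 1) / 2)) := by
    rw [h4, mul_assoc (u s ^ p / β), h5]
    ring
  rw [h6]
  unfold K
  gcongr

lemma bubble (h : HData β p u q) {r : ℝ} (hr : r ∈ Ioo (0:ℝ) 1) :
    (p - 1) / 2 * u 0 ^ ((p - 1) / 2) / β ^ 2 * r ^ β ≤ u r ^ (-((p - 1) / 2)) := by
  have hβ := h.hβ
  have hp := h.hp
  have hd : ∀ s ∈ Icc 0 r, s ∈ Ico (0:ℝ) 1 := fun s hs => ⟨hs.1, lt_of_le_of_lt hs.2 hr.2⟩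
  have hm : MonotoneOn (fun s => u s ^ (-((p - 1) / 2)) -
      (p - 1) / 2 * u 0 ^ ((p - 1) / 2) / β ^ 2 * s ^ β) (Icc 0 r) := by
    apply mono_of_deriv (((h.cu.mono (Icc_subset_Icc_right hr.2.le)).rpow_const
      (fun s hs => Or.inl (h.pos s (hd s hs)).ne')).sub
        (continuousOn_const.mul (crpow (by linarith))))
      (fun s hs => ((h.du s ⟨hs.1, (hd s ⟨hs.1.le, hs.2.le⟩).2⟩).rpow_const
        (Or.inl (h.pos s (hd s ⟨hs.1.le, hs.2.le⟩)).ne')).sub ((drpow hs.1).const_mul _))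
    intro s hs
    have hs0 := hs.1
    have hs' : s ∈ Ioo (0:ℝ) 1 := ⟨hs.1, hs.2.trans hr.2⟩
    have hu := h.pos s ⟨hs'.1.le, hs'.2⟩
    have hk := h.Klower hs'
    have he : -(q s / s) * -((p - 1) / 2) * u s ^ (-((p - 1) / 2) - 1)
        - (p - 1) / 2 * u 0 ^ ((p - 1) / 2) / β ^ 2 * (β * s ^ (β - 1))
        = (p - 1) / 2 * s ^ (β - 1) * (K β p u q s - u 0 ^ ((p - 1) / 2) / β) := by
      have h1 : -((p - 1) / 2) - 1 = -((p + 1) / 2) := by ring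
      have h2 : s ^ (β - 1) * s ^ (-β) = s⁻¹ := by
        rw [← Real.rpow_add hs0, ← Real.rpow_neg_one]
        congr 1
        ring
      unfold K
      rw [h1, mul_sub, show (p - 1) / 2 * s ^ (β - 1) * (q s * s ^ (-β) * u s ^ (-((p + 1) / 2)))
        = (p - 1) / 2 * (s ^ (β - 1) * s ^ (-β)) * q s * u s ^ (-((p + 1) / 2)) by ring, h2]
      field_simp
    rw [he]
    have : 0 ≤ K β p u q s - u 0 ^ ((p - 1) / 2) / β := by linarith
    have : 0 ≤ (p - 1) / 2 := by linarith
    positivity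
  have h1 := hm ⟨le_rfl, hr.1.le⟩ ⟨hr.1.le, le_rfl⟩ hr.1.le
  simp only [Real.zero_rpow (show β ≠ 0 by linarith)] at h1
  have := Real.rpow_nonneg (h.pos 0 (by simp)).le (-((p - 1) / 2))
  linarith

lemma core (h : HData β p u q) {m y C : ℝ} (hm : m = (p - 1) / 2) (hy : y = 2 * Real.log (u 0))
    (hC : C = Real.log (p / β ^ 2)) :
    m * (1 + 1 / p) ≤ C + m * y ∧
    Real.exp y * (1 - 1 / p) * m ≤ (C + m * y) * (Real.exp 1 * (β ^ 2 / m) ^ (1 / m)) := by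
  have hβ := h.hβ
  have hp := h.hp
  have hM := h.pos 0 (by simp)
  have hm0 : 0 < m := by rw [hm]; linarith
  set M := u 0 with hMdef
  -- lower bound M^(p-1) ≥ β^2
  have hMp : M ^ p = M ^ (p - 1) * M := by
    rw [← Real.rpow_add_one hM.ne']
    congr 1
    ring
  have hA := h.ulower (r := 1) (by simp)
  rw [h.u1, ← hMdef, Real.one_rpow, hMp, mul_one] at hA
  have hP : 0 < M ^ (p - 1) := Real.rpow_pos_of_pos hM _
  have hA2 : β ^ 2 ≤ M ^ (p - 1) := by
    by_contra hcon
    push Not at hcon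
    have : M ^ (p - 1) * M / β ^ 2 < M := by
      rw [div_lt_iff₀ (by positivity)]
      nlinarith
    linarith
  -- the radius r2
  set s := β ^ 2 / (p * M ^ (p - 1)) with hs
  have hs0 : 0 < s := by positivity
  have hs1 : s < 1 := by
    rw [hs, div_lt_one (by positivity)]
    nlinarith
  have hlogs : -Real.log s = C + m * y := by
    rw [hs, Real.log_div (by positivity) (by positivity), Real.log_mul (by positivity) hP.ne',
      Real.log_rpow hM, hC, Real.log_div (by positivity) (by positivity), hm, hy]
    ring
  set r2 := s ^ (1 / β) with hr2
  have hr20 : 0 < r2 := Real.rpow_pos_of_pos hs0 _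
  have hr21 : r2 < 1 := Real.rpow_lt_one hs0.le hs1 (by positivity)
  have hr2b : r2 ^ β = s := by
    rw [hr2, ← Real.rpow_mul hs0.le, one_div_mul_cancel (by linarith), Real.rpow_one]
  have hlog2 : -Real.log r2 = (C + m * y) / β := by
    rw [hr2, Real.log_rpow hs0, ← hlogs]
    ring
  have hu2 : M * (1 - 1 / p) ≤ u r2 := by
    have h1 := h.ulower (r := r2) ⟨hr20.le, hr21.le⟩
    rw [hr2b, ← hMdef, hMp] at h1
    refine le_trans (le_of_eq ?_) h1
    rw [hs]
    field_simp
  -- first bound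
  have hT2 : 0 < C + m * y := by
    rw [← hlogs]
    have := Real.log_neg hs0 hs1
    linarith
  have hA3 : m * (1 + 1 / p) ≤ C + m * y := by
    have h1 := h.tangent (a := 1) (b := r2) (by simp) ⟨hr20, hr21.le⟩
    rw [h.u1, Real.log_one] at h1
    have h2 := h.pohozaev
    rw [← hMdef] at h2
    have h3 : u r2 ≤ q 1 * ((C + m * y) / β) := by rw [← hlog2]; linarith
    have h4 : q 1 ≤ 2 * β * M / (p + 1) := by
      rw [le_div_iff₀ (by linarith)]; exact h2
    have h5 : M * (1 - 1 / p) ≤ 2 * β * M / (p + 1) * ((C + m * y) / β) := by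
      refine hu2.trans (h3.trans ?_)
      gcongr
    have h6 : 2 * β * M / (p + 1) * ((C + m * y) / β) = M * (2 * (C + m * y) / (p + 1)) := by
      field_simp
    rw [h6] at h5
    have h7 := le_of_mul_le_mul_left h5 hM
    rw [le_div_iff₀ (by linarith)] at h7
    have h8 : m * (1 + 1 / p) = (1 - 1 / p) * (p + 1) / 2 := by
      rw [hm]
      field_simp
    rw [h8]
    linarith
  refine ⟨hA3, ?_⟩
  -- the radius r1
  set r1 := Real.exp (-(m / β)) with hr1
  have hr10 : 0 < r1 := Real.exp_pos _
  have hr11 : r1 < 1 := by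
    rw [hr1, Real.exp_lt_one_iff]
    have : 0 < m / β := by positivity
    linarith
  have hr1b : r1 ^ β = Real.exp (-m) := by
    rw [hr1, ← Real.exp_mul]
    congr 1
    field_simp
  have hlog1 : Real.log r1 = -(m / β) := Real.log_exp _
  have hu1 := h.pos r1 ⟨hr10.le, hr11⟩
  have hb : M * u r1 ≤ Real.exp 1 * (β ^ 2 / m) ^ (1 / m) := by
    have h1 := h.bubble ⟨hr10, hr11⟩
    rw [← hMdef, ← hm, hr1b, Real.rpow_neg hu1.le, le_inv_comm₀ (by positivity) (by positivity)]
      at h1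
    have hMm : 0 < M ^ m := Real.rpow_pos_of_pos hM _
    have h2 : (M * u r1) ^ m ≤ Real.exp m * (β ^ 2 / m) := by
      rw [Real.mul_rpow hM.le hu1.le]
      calc M ^ m * u r1 ^ m ≤ M ^ m * (m * M ^ m / β ^ 2 * Real.exp (-m))⁻¹ := by gcongr
        _ = _ := by
          rw [Real.exp_neg]
          field_simp
    have h3 : (M * u r1) = ((M * u r1) ^ m) ^ (1 / m) := by
      rw [← Real.rpow_mul (by positivity), mul_one_div_cancel hm0.ne', Real.rpow_one]
    rw [h3]
    calc ((M * u r1) ^ m) ^ (1 / m) ≤ (Real.exp m * (β ^ 2 / m)) ^ (1 / m) := by gcongr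
      _ = _ := by
        rw [Real.mul_rpow (by positivity) (by positivity), ← Real.exp_mul,
          mul_one_div_cancel hm0.ne']
  have hle : m ≤ C + m * y := by
    have : 0 ≤ m * (1 / p) := by positivity
    linarith
  have hch : u r2 * m ≤ u r1 * (C + m * y) := by
    have h1 := h.tangent (a := r1) (b := 1) ⟨hr10, hr11.le⟩ (by simp)
    have h2 := h.tangent (a := r1) (b := r2) ⟨hr10, hr11.le⟩ ⟨hr20, hr21.le⟩
    rw [h.u1, Real.log_one, hlog1] at h1
    have h3 : Real.log r2 = -((C + m * y) / β) := by linarith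
    rw [hlog1, h3] at h2
    have hq := h.qnonneg (r := r1) ⟨hr10.le, hr11.le⟩
    set T := C + m * y
    have h4 : q r1 * m ≤ u r1 * β := by
      have : q r1 * (m / β) ≤ u r1 := by linarith
      have h5 : q r1 * m = q r1 * (m / β) * β := by field_simp
      rw [h5]
      gcongr
    have h6 : u r2 * m ≤ (u r1 - q r1 * (-(T / β) - -(m / β))) * m := by gcongr
    have h7 : (u r1 - q r1 * (-(T / β) - -(m / β))) * m
        = u r1 * m + (q r1 * m) * ((T - m) / β) := by ring
    have h8 : (q r1 * m) * ((T - m) / β) ≤ (u r1 * β) * ((T - m) / β) := by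
      have : 0 ≤ (T - m) / β := div_nonneg (by linarith) (by linarith)
      gcongr
    have h9 : (u r1 * β) * ((T - m) / β) = u r1 * (T - m) := by field_simp
    linarith
  have hexpy : Real.exp y = M * M := by
    rw [hy, two_mul, Real.exp_add, Real.exp_log hM]
  calc Real.exp y * (1 - 1 / p) * m = M * ((M * (1 - 1 / p)) * m) := by rw [hexpy]; ring
    _ ≤ M * (u r2 * m) := by gcongr
    _ ≤ M * (u r1 * (C + m * y)) := by gcongr
    _ = (C + m * y) * (M * u r1) := by ring
    _ ≤ _ := by gcongr

end HData

lemma hdata_of (α : ℝ) (hα : 0 ≤ α) (p : ℝ) (hp : 1 < p) (u : ℝ → ℝ)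
    (hreg1 : ContDiffOn ℝ 1 u (Icc 0 1))
    (hreg2 : ContDiffOn ℝ 2 u (Ioo 0 1))
    (heq : ∀ r ∈ Ioo (0:ℝ) 1,
      deriv (fun s => s * deriv u s) r + r ^ (1 + α) * |u r| ^ (p - 1) * u r = 0)
    (hbdry : u 1 = 0)
    (hpos : ∀ r ∈ Ico (0:ℝ) 1, 0 < u r) :
    HData (2 + α) p u (fun r => -(r * derivWithin u (Icc 0 1) r)) := by
  have hd : ∀ r ∈ Ioo (0:ℝ) 1, derivWithin u (Icc 0 1) r = deriv u r := fun r hr =>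
    derivWithin_of_mem_nhds (Icc_mem_nhds hr.1 hr.2)
  refine ⟨by linarith, hp, hreg1.continuousOn, ?_, ?_, ?_, by simp, hbdry, hpos⟩
  · exact (continuousOn_id.mul
      (hreg1.continuousOn_derivWithin (uniqueDiffOn_Icc one_pos) le_rfl)).neg
  · intro r hr
    have h1 : DifferentiableAt ℝ u r :=
      (hreg2.differentiableOn (by norm_num)).differentiableAt (isOpen_Ioo.mem_nhds hr)
    refine h1.hasDerivAt.congr_deriv ?_
    have := hr.1
    simp only [hd r hr]
    field_simp
  · intro r hr
    have h1 : DifferentiableAt ℝ (deriv u) r := by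
      have h2 : ContDiffOn ℝ 1 (deriv u) (Ioo 0 1) :=
        hreg2.deriv_of_isOpen isOpen_Ioo (by norm_num)
      exact (h2.differentiableOn (by norm_num)).differentiableAt (isOpen_Ioo.mem_nhds hr)
    have h2 : HasDerivAt (fun s => s * deriv u s) (deriv (fun s => s * deriv u s) r) r :=
      (differentiableAt_id.mul h1).hasDerivAt
    have h3 := h2.neg
    have hu := hpos r ⟨hr.1.le, hr.2⟩
    have h4 : -deriv (fun s => s * deriv u s) r = r ^ (2 + α - 1) * u r ^ p := by
      have h5 := heq r hr
      rw [abs_of_pos hu, mul_assoc, ← Real.rpow_add_one hu.ne', sub_add_cancel] at h5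
      rw [show 2 + α - 1 = 1 + α by ring]
      linarith
    rw [h4] at h3
    refine h3.congr_of_eventuallyEq ?_
    filter_upwards [isOpen_Ioo.mem_nhds hr] with s hs
    simp [hd s hs]

lemma limit_aux (β : ℝ) (hβ : 2 ≤ β) (y : ℝ → ℝ)
    (h : ∀ p : ℝ, 1 < p → (p - 1) / 2 * (1 + 1 / p) ≤ Real.log (p / β ^ 2) + (p - 1) / 2 * y p ∧
      Real.exp (y p) * (1 - 1 / p) * ((p - 1) / 2) ≤
      (Real.log (p / β ^ 2) + (p - 1) / 2 * y p) *
        (Real.exp 1 * (β ^ 2 / ((p - 1) / 2)) ^ (1 / ((p - 1) / 2)))) :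
    Tendsto y atTop (nhds 1) := by
  have hm : Tendsto (fun p : ℝ => (p - 1) / 2) atTop atTop :=
    (tendsto_atTop_add_const_right atTop (-1) tendsto_id).atTop_div_const (by norm_num)
  have hlogm : Tendsto (fun x : ℝ => Real.log x / x) atTop (nhds 0) := by
    simpa using Real.isLittleO_log_id_atTop.tendsto_div_nhds_zero
  have hinvp : Tendsto (fun p : ℝ => 1 / p) atTop (nhds 0) := by
    simpa using tendsto_inv_atTop_zero (𝕜 := ℝ)
  have hinvm : Tendsto (fun p : ℝ => ((p - 1) / 2)⁻¹) atTop (nhds 0) :=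
    tendsto_inv_atTop_zero.comp hm
  -- κ
  have hκ : Tendsto (fun p : ℝ => Real.log (p / β ^ 2) / ((p - 1) / 2)) atTop (nhds 0) := by
    have h1 : Tendsto (fun p : ℝ => (Real.log p / p) * (2 + ((p - 1) / 2)⁻¹)
        - Real.log (β ^ 2) * ((p - 1) / 2)⁻¹) atTop (nhds (0 * (2 + 0) - Real.log (β ^ 2) * 0)) :=
      (hlogm.mul (hinvm.const_add 2)).sub (hinvm.const_mul _)
    simp only [zero_mul, mul_zero, sub_zero] at h1
    refine h1.congr' ?_
    filter_upwards [eventually_gt_atTop 1] with p hp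
    have : p - 1 ≠ 0 := by linarith
    rw [Real.log_div (by linarith) (by positivity)]
    field_simp
    ring
  have hη : Tendsto (fun p : ℝ => (β ^ 2 / ((p - 1) / 2)) ^ (1 / ((p - 1) / 2))) atTop
      (nhds 1) := by
    have h1 : Tendsto (fun x : ℝ => Real.exp (Real.log (β ^ 2) * x⁻¹ - Real.log x / x)) atTop
        (nhds (Real.exp (Real.log (β ^ 2) * 0 - 0))) :=
      (Real.continuous_exp.tendsto _).comp
        ((tendsto_inv_atTop_zero.const_mul _).sub hlogm)
    simp only [mul_zero, sub_zero, Real.exp_zero] at h1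
    refine (h1.comp hm).congr' ?_
    filter_upwards [eventually_gt_atTop 1] with p hp
    have : 0 < (p - 1) / 2 := by linarith
    simp only [Function.comp]
    rw [Real.rpow_def_of_pos (by positivity),
      Real.log_div (x := β ^ 2) (y := (p - 1) / 2) (by positivity) this.ne']
    congr 1
    ring
  set κ : ℝ → ℝ := fun p => Real.log (p / β ^ 2) / ((p - 1) / 2) with hκdef
  set η : ℝ → ℝ := fun p => (β ^ 2 / ((p - 1) / 2)) ^ (1 / ((p - 1) / 2)) with hηdef
  set θ : ℝ → ℝ := fun p => η p * Real.exp (κ p) / (1 - 1 / p) - 1 with hθdef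
  have hθ : Tendsto θ atTop (nhds 0) := by
    have h1 : Tendsto θ atTop (nhds (1 * Real.exp 0 / (1 - 0) - 1)) :=
      ((hη.mul ((Real.continuous_exp.tendsto _).comp hκ)).div (hinvp.const_sub 1)
        (by norm_num)).sub_const 1
    simpa using h1
  have hup : Tendsto (fun p => θ p + Real.sqrt (2 * θ p + θ p ^ 2)) atTop (nhds 0) := by
    have h1 : Tendsto (fun p => θ p + Real.sqrt (2 * θ p + θ p ^ 2)) atTop
        (nhds (0 + Real.sqrt (2 * 0 + 0 ^ 2))) :=
      hθ.add ((Real.continuous_sqrt.tendsto _).comp ((hθ.const_mul 2).add (hθ.pow 2)))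
    simpa using h1
  have hv : Tendsto (fun p => y p + κ p - 1) atTop (nhds 0) := by
    refine tendsto_of_tendsto_of_tendsto_of_le_of_le' tendsto_const_nhds hup ?_ ?_
    · filter_upwards [eventually_gt_atTop 1] with p hp
      obtain ⟨h1, -⟩ := h p hp
      have hm0 : 0 < (p - 1) / 2 := by linarith
      have h2 : Real.log (p / β ^ 2) = (p - 1) / 2 * κ p := by
        rw [hκdef]; field_simp
      rw [h2, ← mul_add] at h1
      have h3 := le_of_mul_le_mul_left h1 hm0
      have : 0 < 1 / p := by positivity
      linarith
    · filter_upwards [eventually_gt_atTop 1] with p hp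
      obtain ⟨h1, h4⟩ := h p hp
      have hm0 : 0 < (p - 1) / 2 := by linarith
      have h2 : Real.log (p / β ^ 2) = (p - 1) / 2 * κ p := by
        rw [hκdef]; field_simp
      rw [h2, ← mul_add] at h1 h4
      have h3 := le_of_mul_le_mul_left h1 hm0
      have hp0 : 0 < 1 / p := by positivity
      have hp1 : 0 < 1 - 1 / p := by
        have : 1 / p < 1 := by rw [div_lt_one (by linarith)]; exact hp
        linarith
      have h5 : Real.exp (y p) * (1 - 1 / p) ≤ (κ p + y p) * (Real.exp 1 * η p) := by
        refine le_of_mul_le_mul_left ?_ hm0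
        calc _ = Real.exp (y p) * (1 - 1 / p) * ((p - 1) / 2) := by ring
          _ ≤ _ := h4
          _ = _ := by rw [hηdef]; ring
      set v := y p + κ p - 1 with hvdef
      have hv0 : 0 ≤ v := by linarith
      have h6 : Real.exp v ≤ (1 + v) * (1 + θ p) := by
        have e1 : Real.exp v = Real.exp (y p) * (Real.exp (κ p) * Real.exp (-1)) := by
          rw [← Real.exp_add, ← Real.exp_add]
          congr 1
          rw [hvdef]; ring
        have e2 : (1 + v) * (1 + θ p)
            = ((κ p + y p) * (Real.exp 1 * η p) / (1 - 1 / p)) *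
              (Real.exp (κ p) * Real.exp (-1)) := by
          rw [hvdef, hθdef, Real.exp_neg]
          simp only
          field_simp
          ring
        rw [e1, e2]
        have h7 : Real.exp (y p) ≤ (κ p + y p) * (Real.exp 1 * η p) / (1 - 1 / p) := by
          rw [le_div_iff₀ hp1]; exact h5
        gcongr
      have h8 := Real.quadratic_le_exp_of_nonneg hv0
      have h9 : (v - θ p) ^ 2 ≤ 2 * θ p + θ p ^ 2 := by nlinarith
      have h10 := Real.le_sqrt_of_sq_le h9
      linarith
  have h1 : Tendsto (fun p => (y p + κ p - 1) - κ p + 1) atTop (nhds (0 - 0 + 1)) :=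
    (hv.sub hκ).add_const 1
  simp only [sub_zero, zero_add] at h1
  refine h1.congr (fun p => by ring)

/-- Let `u p` be the positive least-energy radial solution of the Hénon
problem in the unit disc (radial profile form). As `p → ∞`, `u p 0 → √e` and
`ρ p = (p · u p 0 ^ (p-1))^(-1/(2+α)) → 0`. -/
theorem henon_positive_asymptotics
    (α : ℝ) (hα : 0 ≤ α) (u : ℝ → ℝ → ℝ) (ρ : ℝ → ℝ)
    (hreg1 : ∀ p : ℝ, 1 < p → ContDiffOn ℝ 1 (u p) (Icc 0 1))
    (hreg2 : ∀ p : ℝ, 1 < p → ContDiffOn ℝ 2 (u p) (Ioo 0 1))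
    (heq : ∀ p : ℝ, 1 < p → ∀ r ∈ Ioo (0:ℝ) 1,
      deriv (fun s => s * deriv (u p) s) r + r ^ (1 + α) * |u p r| ^ (p - 1) * u p r = 0)
    (hderiv0 : ∀ p : ℝ, 1 < p → deriv (u p) 0 = 0)
    (hbdry : ∀ p : ℝ, 1 < p → u p 1 = 0)
    (hpos : ∀ p : ℝ, 1 < p → ∀ r ∈ Ico (0:ℝ) 1, 0 < u p r)
    (hρ : ∀ p : ℝ, ρ p = (p * u p 0 ^ (p - 1)) ^ (-(1 / (2 + α)))) :
    Tendsto (fun p => u p 0) atTop (nhds (Real.sqrt (Real.exp 1))) ∧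
      Tendsto ρ atTop (nhds 0) := by
  have hd : ∀ p, 1 < p → HData (2 + α) p (u p)
      (fun r => -(r * derivWithin (u p) (Icc 0 1) r)) := fun p hp =>
    hdata_of α hα p hp (u p) (hreg1 p hp) (hreg2 p hp) (heq p hp) (hbdry p hp) (hpos p hp)
  have hy := limit_aux (2 + α) (by linarith) (fun p => 2 * Real.log (u p 0))
    (fun p hp => (hd p hp).core rfl rfl rfl)
  have h1 : Tendsto (fun p => u p 0) atTop (nhds (Real.sqrt (Real.exp 1))) := by
    rw [← Real.exp_half]
    refine ((Real.continuous_exp.tendsto _).comp (hy.div_const 2)).congr' ?_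
    filter_upwards [eventually_gt_atTop 1] with p hp
    simp only [Function.comp]
    rw [mul_div_cancel_left₀ _ (two_ne_zero), Real.exp_log (hpos p hp 0 (by simp))]
  refine ⟨h1, ?_⟩
  have hgt : 1 < Real.sqrt (Real.exp 1) := by
    rw [← Real.exp_half]
    exact Real.one_lt_exp_iff.mpr (by norm_num)
  have h2 : Tendsto (fun p => p * u p 0 ^ (p - 1)) atTop atTop := by
    refine tendsto_atTop_mono' atTop ?_ tendsto_id
    filter_upwards [h1.eventually (lt_mem_nhds hgt), eventually_gt_atTop 1] with p hp hp1
    have : 1 ≤ u p 0 ^ (p - 1) := Real.one_le_rpow hp.le (by linarith)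
    simp only [id]
    nlinarith
  have h3 := (tendsto_rpow_neg_atTop (y := 1 / (2 + α)) (by positivity)).comp h2
  exact h3.congr (fun p => (hρ p).symm)
end

section
/- Define the rescaled functions ũ_p(r) := p·(u_p(ρ_p·r) − u_p(0))/u_p(0), which are defined for 0 ≤ r < 1/ρ_p, and let U(r) := log( 4(2+α)⁴ / (2(2+α)² + r^{2+α})² ). Then ũ_p converges to U in C¹_loc([0,∞)) as p → ∞; that is, for every compact set K ⊂ [0,∞) there is p_K such that K ⊂ [0, 1/ρ_p) for all p > p_K, and sup_{r∈K} |ũ_p(r) − U(r)| → 0 and sup_{r∈K} |ũ_p′(r) − U′(r)| → 0 as p → ∞. -/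
open Real Set Filter MeasureTheory

lemma henon_hd {f g : ℝ → ℝ} {a b x : ℝ} (h : HasDerivAt f a x) (hf : ∀ s, g s = f s)
    (hab : b = a) : HasDerivAt g b x := by
  have : g = f := funext hf
  rw [this, hab]; exact h

lemma henon_comp {R : ℝ} {f g f' g' : ℝ → ℝ}
    (hf : ContinuousOn f (Icc 0 R)) (hg : ContinuousOn g (Icc 0 R))
    (hf' : ∀ x ∈ Ioo (0:ℝ) R, HasDerivAt f (f' x) x)
    (hg' : ∀ x ∈ Ioo (0:ℝ) R, HasDerivAt g (g' x) x)
    (h : ∀ x ∈ Ioo (0:ℝ) R, f' x ≤ g' x) (h0 : f 0 ≤ g 0) :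
    ∀ x ∈ Icc (0:ℝ) R, f x ≤ g x := by
  intro x hx
  have hm : MonotoneOn (fun s => g s - f s) (Icc 0 R) := by
    refine monotoneOn_of_deriv_nonneg (convex_Icc 0 R) (hg.sub hf) ?_ ?_
    · intro y hy
      rw [interior_Icc] at hy
      exact ((hg' y hy).sub (hf' y hy)).differentiableAt.differentiableWithinAt
    · intro y hy
      rw [interior_Icc] at hy
      have := ((hg' y hy).sub (hf' y hy)).deriv
      have h2 := h y hy
      change deriv (g - f) y ≥ 0
      rw [this]; linarith
  have := hm (left_mem_Icc.2 (hx.1.trans hx.2)) hx hx.1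
  simp only at this
  linarith

/-- a priori bounds -/
lemma henon_bounds {α T : ℝ} (hα : 0 ≤ α) {w w' F : ℝ → ℝ}
    (hw : ContinuousOn w (Icc 0 T)) (hH : ContinuousOn (fun s => s * w' s) (Icc 0 T))
    (hw' : ∀ x ∈ Ioo (0:ℝ) T, HasDerivAt w (w' x) x)
    (hH' : ∀ x ∈ Ioo (0:ℝ) T, HasDerivAt (fun s => s * w' s) (-(x ^ (1 + α) * F x)) x)
    (hw0 : w 0 = 0) (hF0 : ∀ x ∈ Ioo (0:ℝ) T, 0 ≤ F x)
    (hF1 : ∀ x ∈ Ioo (0:ℝ) T, w x ≤ 0 → F x ≤ 1) :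
    ∀ x ∈ Icc (0:ℝ) T, w x ≤ 0 ∧ -(x ^ (2 + α) / (2 + α) ^ 2) ≤ w x := by
  have h1 : ∀ x ∈ Icc (0:ℝ) T, x * w' x ≤ 0 := by
    refine henon_comp (g := fun _ => 0) (g' := fun _ => 0) hH continuousOn_const hH'
      (fun x _ => hasDerivAt_const x 0) ?_ (by simp)
    intro x hx
    have := mul_nonneg (rpow_nonneg hx.1.le (1 + α)) (hF0 x hx)
    linarith
  have h2 : ∀ x ∈ Icc (0:ℝ) T, w x ≤ 0 := by
    refine henon_comp (g := fun _ => 0) (g' := fun _ => 0) hw continuousOn_const hw'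
      (fun x _ => hasDerivAt_const x 0) ?_ (by simp [hw0])
    intro x hx
    have := h1 x ⟨hx.1.le, hx.2.le⟩
    by_contra hc
    push Not at hc
    have := mul_pos hx.1 hc
    linarith
  have hd : ∀ x ∈ Ioo (0:ℝ) T,
      HasDerivAt (fun s : ℝ => s ^ (2 + α)) ((2 + α) * x ^ (1 + α)) x := by
    intro x hx
    have := Real.hasDerivAt_rpow_const (x := x) (p := 2 + α) (Or.inl hx.1.ne')
    convert this using 3
    ring
  have hc : Continuous (fun s : ℝ => s ^ (2 + α)) :=
    Real.continuous_rpow_const (by linarith)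
  have h3 : ∀ x ∈ Icc (0:ℝ) T, -(x ^ (2 + α) / (2 + α)) ≤ x * w' x := by
    refine henon_comp (f' := fun x => -(((2 + α) * x ^ (1 + α)) / (2 + α)))
      ((hc.div_const _).neg.continuousOn) hH
      (fun x hx => ((hd x hx).div_const _).neg) hH' ?_ ?_
    · intro x hx
      have := mul_le_mul_of_nonneg_left (hF1 x hx (h2 x ⟨hx.1.le, hx.2.le⟩))
        (rpow_nonneg hx.1.le (1 + α))
      rw [mul_div_cancel_left₀ _ (by linarith)]
      linarith
    · rw [Real.zero_rpow (by linarith)]; simp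
  refine fun x hx => ⟨h2 x hx, ?_⟩
  revert x
  refine henon_comp (f' := fun x => -(((2 + α) * x ^ (1 + α)) / (2 + α) ^ 2))
      ((hc.div_const _).neg.continuousOn) hw
      (fun x hx => ((hd x hx).div_const _).neg) hw' ?_ ?_
  · intro x hx
    have h4 := h3 x ⟨hx.1.le, hx.2.le⟩
    have h5 : x ^ (2 + α) = x * x ^ (1 + α) := by
      rw [show 2 + α = 1 + (1 + α) by ring, Real.rpow_add hx.1, Real.rpow_one]
    rw [h5] at h4
    have h6 : (2 + α) * x ^ (1 + α) / (2 + α) ^ 2 = x ^ (1 + α) / (2 + α) := by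
      field_simp
    rw [h6]
    have : x * (-(x ^ (1 + α) / (2 + α))) ≤ x * w' x := by
      calc _ = -(x * x ^ (1 + α) / (2 + α)) := by ring
        _ ≤ _ := h4
    exact le_of_mul_le_mul_left this hx.1
  · rw [Real.zero_rpow (by linarith)]; simp [hw0]

/-- stability -/
lemma henon_stab {α R ε : ℝ} (hα : 0 ≤ α) (hR : 0 < R) (hε : 0 ≤ ε) {d d' F : ℝ → ℝ}
    (hd : ContinuousOn d (Icc 0 R)) (hH : ContinuousOn (fun s => s * d' s) (Icc 0 R))
    (hd' : ∀ x ∈ Ioo (0:ℝ) R, HasDerivAt d (d' x) x)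
    (hH' : ∀ x ∈ Ioo (0:ℝ) R, HasDerivAt (fun s => s * d' s) (x ^ (1 + α) * F x) x)
    (hd0 : d 0 = 0) (hF : ∀ x ∈ Ioo (0:ℝ) R, |F x| ≤ ε + |d x|) :
    (∀ x ∈ Icc (0:ℝ) R, |d x| ≤ ε * (R ^ α * R ^ 2 * exp ((R ^ α + 1) * R))) ∧
    (∀ x ∈ Ioo (0:ℝ) R, |d' x| ≤
      ε * (R ^ α * (R + R ^ α * R ^ 2 * exp ((R ^ α + 1) * R)))) := by
  set c := R ^ α with hc
  have hc0 : 0 ≤ c := rpow_nonneg hR.le _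
  set L := c + 1 with hL
  have hL1 : 1 ≤ L := by linarith
  have hL0 : 0 < L := by linarith
  obtain ⟨x0, hx0, hmax⟩ := isCompact_Icc.exists_isMaxOn (nonempty_Icc.2 hR.le)
    (f := fun x => |d x| * exp (-(L * x)))
    (hd.abs.mul (by fun_prop))
  set A := |d x0| * exp (-(L * x0)) with hA
  have hA0 : 0 ≤ A := by positivity
  have hdA : ∀ x ∈ Icc (0:ℝ) R, |d x| ≤ A * exp (L * x) := by
    intro x hx
    have h1 : |d x| * exp (-(L * x)) ≤ A := hmax hx
    calc |d x| = |d x| * exp (-(L * x)) * exp (L * x) := by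
          rw [mul_assoc, ← Real.exp_add]; simp
      _ ≤ _ := by gcongr
  have hexp : ∀ x : ℝ, HasDerivAt (fun s => exp (L * s)) (exp (L * x) * L) x := by
    intro x
    have := ((hasDerivAt_id x).const_mul L).exp
    simpa using this
  -- first comparison
  have hg1 : ∀ x : ℝ, HasDerivAt (fun s => c * (s * (ε * s + A * exp (L * s) / L)))
      (c * (2 * ε * x + A * exp (L * x) / L + x * A * exp (L * x))) x := by
    intro x
    have := ((hasDerivAt_id x).mul (((hasDerivAt_id x).const_mul ε).add
      (((hexp x).const_mul A).div_const L))).const_mul c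
    refine henon_hd this (fun s => rfl) ?_
    congr 1
    simp
    field_simp
    ring
  have hbd : ∀ x ∈ Ioo (0:ℝ) R, |x ^ (1 + α) * F x| ≤
      c * (2 * ε * x + A * exp (L * x) / L + x * A * exp (L * x)) := by
    intro x hx
    have hx0 := hx.1
    have h1 : |F x| ≤ ε + A * exp (L * x) :=
      (hF x hx).trans (by linarith [hdA x ⟨hx.1.le, hx.2.le⟩])
    have h2 : x ^ (1 + α) = x * x ^ α := by rw [Real.rpow_add hx.1, Real.rpow_one]
    have h3 : x ^ α ≤ c := Real.rpow_le_rpow hx.1.le hx.2.le hα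
    have h4 : 0 ≤ x ^ α := rpow_nonneg hx.1.le _
    rw [abs_mul, abs_of_nonneg (rpow_nonneg hx.1.le _), h2]
    calc x * x ^ α * |F x| ≤ x * c * (ε + A * exp (L * x)) := by gcongr
      _ = c * (ε * x + x * A * exp (L * x)) := by ring
      _ ≤ _ := by
        gcongr
        have : 0 ≤ A * exp (L * x) / L := by positivity
        have : 0 ≤ ε * x := by positivity
        linarith
  have hgc1 : ContinuousOn (fun s => c * (s * (ε * s + A * exp (L * s) / L))) (Icc 0 R) :=
    fun x _ => (hg1 x).continuousAt.continuousWithinAt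
  have hup := henon_comp hH hgc1 hH' (fun x _ => hg1 x)
    (fun x hx => (le_abs_self _).trans (hbd x hx)) (by simp)
  have hlo := henon_comp hH.neg hgc1 (fun x hx => (hH' x hx).neg) (fun x _ => hg1 x)
    (fun x hx => (neg_le_abs _).trans (hbd x hx)) (by simp)
  have hd'b : ∀ x ∈ Ioo (0:ℝ) R, |d' x| ≤ c * (ε * x + A * exp (L * x) / L) := by
    intro x hx
    have h1 := hup x ⟨hx.1.le, hx.2.le⟩
    have h2 := hlo x ⟨hx.1.le, hx.2.le⟩
    simp only [Pi.neg_apply] at h1 h2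
    rw [abs_le]
    constructor <;> refine le_of_mul_le_mul_left ?_ hx.1 <;> linarith
  have hg2 : ∀ x : ℝ, HasDerivAt (fun s => c * (ε * s ^ 2 / 2 + A * exp (L * s) / L ^ 2))
      (c * (ε * x + A * exp (L * x) / L)) x := by
    intro x
    have := ((((hasDerivAt_id x).pow 2).const_mul ε).div_const 2 |>.add
      (((hexp x).const_mul A).div_const (L ^ 2))).const_mul c
    refine henon_hd this (fun s => rfl) ?_
    congr 1
    simp
    field_simp
  have hgc2 : ContinuousOn (fun s => c * (ε * s ^ 2 / 2 + A * exp (L * s) / L ^ 2)) (Icc 0 R) :=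
    fun x _ => (hg2 x).continuousAt.continuousWithinAt
  have hup2 := henon_comp hd hgc2 hd' (fun x _ => hg2 x)
    (fun x hx => (le_abs_self _).trans (hd'b x hx)) (by simp [hd0]; positivity)
  have hlo2 := henon_comp hd.neg hgc2 (fun x hx => (hd' x hx).neg) (fun x _ => hg2 x)
    (fun x hx => (neg_le_abs _).trans (hd'b x hx)) (by simp [hd0]; positivity)
  have hAb : A ≤ ε * (c * R ^ 2) := by
    have h1 : |d x0| ≤ c * (ε * x0 ^ 2 / 2 + A * exp (L * x0) / L ^ 2) := by
      rw [abs_le']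
      exact ⟨hup2 x0 hx0, hlo2 x0 hx0⟩
    have he : exp (-(L * x0)) ≤ 1 := by
      rw [Real.exp_le_one_iff]
      have := mul_nonneg hL0.le hx0.1
      linarith
    have hee : exp (L * x0) * exp (-(L * x0)) = 1 := by rw [← Real.exp_add]; simp
    have hcL : c / L ^ 2 ≤ 1 / 2 := by
      rw [div_le_div_iff₀ (by positivity) (by norm_num)]
      rw [hL]; nlinarith [sq_nonneg c]
    have hx2 : x0 ^ 2 ≤ R ^ 2 := by
      have := hx0.1
      have := hx0.2
      gcongr
    have h2 : A ≤ c * ε * R ^ 2 / 2 + A / 2 := by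
      calc A ≤ c * (ε * x0 ^ 2 / 2 + A * exp (L * x0) / L ^ 2) * exp (-(L * x0)) := by
            rw [hA]; gcongr
        _ = c * ε * x0 ^ 2 / 2 * exp (-(L * x0)) + A * (c / L ^ 2) *
            (exp (L * x0) * exp (-(L * x0))) := by ring
        _ ≤ c * ε * R ^ 2 / 2 * 1 + A * (1 / 2) * (exp (L * x0) * exp (-(L * x0))) := by
            gcongr
        _ = _ := by rw [hee]; ring
    linarith
  have hAe : ∀ x ∈ Icc (0:ℝ) R, A * exp (L * x) ≤ ε * (c * R ^ 2 * exp (L * R)) := by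
    intro x hx
    have := hx.2
    calc A * exp (L * x) ≤ ε * (c * R ^ 2) * exp (L * R) := by gcongr
      _ = _ := by ring
  refine ⟨fun x hx => (hdA x hx).trans (hAe x hx), fun x hx => (hd'b x hx).trans ?_⟩
  have h1 := hAe x ⟨hx.1.le, hx.2.le⟩
  have h2 : A * exp (L * x) / L ≤ A * exp (L * x) := div_le_self (by positivity) hL1
  have h3 := hx.2.le
  calc c * (ε * x + A * exp (L * x) / L) ≤ c * (ε * R + ε * (c * R ^ 2 * exp (L * R))) := by
        gcongr; linarith
    _ = _ := by ring

lemma henon_exp {M p w : ℝ} (hM : M < p) (h1 : -M ≤ w) (h2 : w ≤ 0) (hp : 0 < p) :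
    |(1 + w / p) ^ p - exp w| ≤ M ^ 2 / (p - M) := by
  have hwp : 0 < p + w := by linarith
  have h0 : 0 < 1 + w / p := by
    rw [show 1 + w / p = (p + w) / p by field_simp]; positivity
  have e1 : (1 + w / p) ^ p = exp (p * Real.log (1 + w / p)) := by
    rw [Real.rpow_def_of_pos h0, mul_comm]
  have hu : p * Real.log (1 + w / p) ≤ w := by
    have := Real.log_le_sub_one_of_pos h0
    calc _ ≤ p * (1 + w / p - 1) := by gcongr
      _ = w := by field_simp; ring
  have hl : w - M ^ 2 / (p - M) ≤ p * Real.log (1 + w / p) := by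
    have := Real.one_sub_inv_le_log_of_pos h0
    calc w - M ^ 2 / (p - M) ≤ w - w ^ 2 / (p + w) := by
          have : w ^ 2 / (p + w) ≤ M ^ 2 / (p - M) := by
            apply div_le_div₀ (by positivity) (by nlinarith) (by linarith) (by linarith)
          linarith
      _ = p * (1 - (1 + w / p)⁻¹) := by
          rw [show 1 + w / p = (p + w) / p by field_simp]
          field_simp; ring
      _ ≤ _ := by gcongr
  rw [e1, abs_le]
  have hq : 0 ≤ M ^ 2 / (p - M) := div_nonneg (sq_nonneg _) (by linarith)
  constructor
  · have a1 : exp (w - M ^ 2 / (p - M)) ≤ exp (p * Real.log (1 + w / p)) := Real.exp_le_exp.2 hl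
    have a2 : exp (w - M ^ 2 / (p - M)) = exp w * exp (-(M ^ 2 / (p - M))) := by
      rw [← Real.exp_add]; ring_nf
    have a3 := Real.add_one_le_exp (-(M ^ 2 / (p - M)))
    have a4 : exp w ≤ 1 := Real.exp_le_one_iff.2 h2
    have a5 := Real.exp_pos w
    rw [a2] at a1
    nlinarith
  · have := Real.exp_le_exp.2 hu
    linarith

lemma henon_exp_lip {a b : ℝ} (ha : a ≤ 0) (hb : b ≤ 0) : |exp a - exp b| ≤ |a - b| := by
  wlog h : b ≤ a generalizing a b
  · rw [abs_sub_comm, abs_sub_comm a]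
    exact this hb ha (le_of_not_ge h)
  rw [abs_of_nonneg (sub_nonneg.2 (Real.exp_le_exp.2 h)), abs_of_nonneg (sub_nonneg.2 h)]
  have h1 := Real.add_one_le_exp (b - a)
  have h2 : exp b = exp a * exp (b - a) := by rw [← Real.exp_add]; ring_nf
  have h3 : exp a ≤ 1 := Real.exp_le_one_iff.2 ha
  have := Real.exp_pos a
  rw [h2]
  nlinarith

/-- derivative of the limit profile -/
noncomputable def henonU' (α : ℝ) (x : ℝ) : ℝ :=
  -(2 * (2 + α) * x ^ (1 + α) / (2 * (2 + α) ^ 2 + x ^ (2 + α)))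

lemma henon_U_facts {α : ℝ} (hα : 0 ≤ α) {U : ℝ → ℝ}
    (hU : ∀ r : ℝ, U r = Real.log (4 * (2 + α) ^ 4 / (2 * (2 + α) ^ 2 + r ^ (2 + α)) ^ 2)) :
    (∀ x, 0 ≤ x → HasDerivAt U (henonU' α x) x) ∧
    (∀ x, 0 < x → HasDerivAt (fun s => s * henonU' α s) (-(x ^ (1 + α) * exp (U x))) x) ∧
    ContinuousOn (fun s => s * henonU' α s) (Ici 0) ∧
    U 0 = 0 ∧ ∀ x, 0 ≤ x → U x ≤ 0 := by
  have hd : ∀ x : ℝ, 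
      HasDerivAt (fun s : ℝ => s ^ (2 + α)) ((2 + α) * x ^ (1 + α)) x := by
    intro x
    have := Real.hasDerivAt_rpow_const (x := x) (p := 2 + α) (Or.inr (by linarith))
    convert this using 3
    ring
  have hpos : ∀ x : ℝ, 0 ≤ x → 0 < 2 * (2 + α) ^ 2 + x ^ (2 + α) := by
    intro x hx
    have := rpow_nonneg hx (2 + α)
    positivity
  refine ⟨?_, ?_, ?_, ?_, ?_⟩
  · intro x hx
    have hp := hpos x hx
    have h1 := (hd x).const_add (2 * (2 + α) ^ 2)
    have h2 := ((hasDerivAt_const x (4 * (2 + α) ^ 4)).div (h1.pow 2) (pow_pos hp 2).ne').log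
      (by
        have : 0 < 4 * (2 + α) ^ 4 / (2 * (2 + α) ^ 2 + x ^ (2 + α)) ^ 2 := by positivity
        exact this.ne')
    have hUe : U = fun r => Real.log (4 * (2 + α) ^ 4 / (2 * (2 + α) ^ 2 + r ^ (2 + α)) ^ 2) :=
      funext hU
    rw [hUe]
    refine henon_hd h2 (fun s => by simp) ?_
    simp only [henonU', Pi.div_apply, Pi.pow_apply]
    field_simp
    norm_num
    ring
  · intro x hx
    have hp := hpos x hx.le
    have h1 := (hd x).const_add (2 * (2 + α) ^ 2)
    have h2 := (((hd x).const_mul (2 * (2 + α))).div h1 hp.ne').neg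
    have he : (fun s => s * henonU' α s) =ᶠ[nhds x]
        (fun s => -(2 * (2 + α) * s ^ (2 + α) / (2 * (2 + α) ^ 2 + s ^ (2 + α)))) := by
      filter_upwards [lt_mem_nhds hx] with s hs
      have h5 : s ^ (2 + α) = s * s ^ (1 + α) := by
        rw [show 2 + α = 1 + (1 + α) by ring, Real.rpow_add hs, Real.rpow_one]
      simp only [henonU']
      rw [h5]; ring
    refine HasDerivAt.congr_of_eventuallyEq ?_ he
    refine henon_hd h2 (fun s => by simp) ?_
    rw [hU, Real.exp_log (by positivity)]
    field_simp
    ring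
  · intro x hx
    have h1 : ContinuousAt (fun s : ℝ => s ^ (1 + α)) x :=
      (Real.continuous_rpow_const (by linarith)).continuousAt
    have : ContinuousAt (fun s => s * henonU' α s) x :=
      continuousAt_id.mul (((continuousAt_const.mul h1).div
        (continuousAt_const.add (hd x).continuousAt) (hpos x hx).ne').neg)
    exact this.continuousWithinAt
  · rw [hU, Real.zero_rpow (by linarith)]
    rw [show 4 * (2 + α) ^ 4 / (2 * (2 + α) ^ 2 + 0) ^ 2 = 1 by field_simp; ring]
    simp
  · intro x hx
    rw [hU]
    have := rpow_nonneg hx (2 + α)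
    have hp := hpos x hx
    apply Real.log_nonpos (by positivity)
    rw [div_le_one (by positivity)]
    nlinarith [sq_nonneg (2 + α)]

/-- the rescaled equation -/
lemma henon_rescale {α p ρ : ℝ} (hp : 1 < p) {u : ℝ → ℝ} (hα : 0 ≤ α)
    (hreg1 : ContDiffOn ℝ 1 u (Icc 0 1)) (hreg2 : ContDiffOn ℝ 2 u (Ioo 0 1))
    (heq : ∀ r ∈ Ioo (0:ℝ) 1,
      deriv (fun s => s * deriv u s) r + r ^ (1 + α) * |u r| ^ (p - 1) * u r = 0)
    (hpos : ∀ r ∈ Ico (0:ℝ) 1, 0 < u r)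
    (hρ : ρ = (p * u 0 ^ (p - 1)) ^ (-(1 / (2 + α)))) :
    0 < ρ ∧ ∃ w' : ℝ → ℝ,
      ContinuousOn (fun r => p * (u (ρ * r) - u 0) / u 0) (Icc 0 (1 / ρ)) ∧
      ContinuousOn (fun s => s * w' s) (Icc 0 (1 / ρ)) ∧
      (∀ x ∈ Ioo (0:ℝ) (1 / ρ),
        HasDerivAt (fun r => p * (u (ρ * r) - u 0) / u 0) (w' x) x) ∧
      (∀ x ∈ Ioo (0:ℝ) (1 / ρ), HasDerivAt (fun s => s * w' s)
        (-(x ^ (1 + α) * (1 + (p * (u (ρ * x) - u 0) / u 0) / p) ^ p)) x) ∧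
      (∀ x ∈ Ico (0:ℝ) (1 / ρ), 0 < 1 + (p * (u (ρ * x) - u 0) / u 0) / p) := by
  have hu0 : 0 < u 0 := hpos 0 (by simp)
  have hp0 : 0 < p := by linarith
  have hQ : 0 < p * u 0 ^ (p - 1) := by positivity
  have hρ0 : 0 < ρ := by rw [hρ]; positivity
  have hρβ : ρ ^ (2 + α) * (p * u 0 ^ (p - 1)) = 1 := by
    rw [hρ, ← Real.rpow_mul hQ.le]
    rw [show -(1 / (2 + α)) * (2 + α) = -1 by field_simp, Real.rpow_neg_one]
    exact inv_mul_cancel₀ hQ.ne'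
  set D := derivWithin u (Icc 0 1) with hD
  have hDc : ContinuousOn D (Icc 0 1) :=
    hreg1.continuousOn_derivWithin (uniqueDiffOn_Icc one_pos) le_rfl
  have hDd : ∀ t ∈ Ioo (0:ℝ) 1, deriv u t = D t := by
    intro t ht
    exact (derivWithin_of_mem_nhds (Icc_mem_nhds ht.1 ht.2)).symm
  have hud : ∀ t ∈ Ioo (0:ℝ) 1, HasDerivAt u (D t) t := by
    intro t ht
    rw [← hDd t ht]
    exact ((hreg2.differentiableOn (by norm_num)).differentiableAt
      (isOpen_Ioo.mem_nhds ht)).hasDerivAt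
  have hGd : ∀ t ∈ Ioo (0:ℝ) 1,
      HasDerivAt (fun s => s * D s) (-(t ^ (1 + α) * u t ^ (p - 1) * u t)) t := by
    intro t ht
    have h1 : DifferentiableAt ℝ (deriv u) t := by
      have h2 : ContDiffOn ℝ 1 (deriv u) (Ioo 0 1) :=
        ((contDiffOn_succ_iff_deriv_of_isOpen (n := 1) isOpen_Ioo).1 (by
          simpa [one_add_one_eq_two] using hreg2)).2.2
      exact (h2.differentiableOn (by norm_num)).differentiableAt (isOpen_Ioo.mem_nhds ht)
    have h3 := (differentiableAt_id.mul h1).hasDerivAt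
    have h4 := heq t ht
    have h5 : deriv (id * deriv u) t = -(t ^ (1 + α) * u t ^ (p - 1) * u t) := by
      rw [abs_of_pos (hpos t ⟨ht.1.le, ht.2⟩)] at h4
      have : (id * deriv u) = (fun s => s * deriv u s) := rfl
      rw [this]; linarith
    rw [h5] at h3
    refine h3.congr_of_eventuallyEq ?_
    filter_upwards [isOpen_Ioo.mem_nhds ht] with s hs
    simp [hDd s hs]
  have hmap : ∀ x ∈ Icc (0:ℝ) (1 / ρ), ρ * x ∈ Icc (0:ℝ) 1 := by
    intro x hx
    refine ⟨mul_nonneg hρ0.le hx.1, ?_⟩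
    have := hx.2
    rw [le_div_iff₀ hρ0] at this
    linarith
  have hmap' : ∀ x ∈ Ioo (0:ℝ) (1 / ρ), ρ * x ∈ Ioo (0:ℝ) 1 := by
    intro x hx
    refine ⟨mul_pos hρ0 hx.1, ?_⟩
    have := hx.2
    rw [lt_div_iff₀ hρ0] at this
    linarith
  have hlin : ∀ x : ℝ, HasDerivAt (fun s => ρ * s) ρ x := by
    intro x; simpa using (hasDerivAt_id x).const_mul ρ
  have hone : ∀ x, 1 + (p * (u (ρ * x) - u 0) / u 0) / p = u (ρ * x) / u 0 := by
    intro x; field_simp; ring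
  refine ⟨hρ0, fun s => p / u 0 * (D (ρ * s) * ρ), ?_, ?_, ?_, ?_, ?_⟩
  · have h1 : ContinuousOn (fun r => u (ρ * r)) (Icc 0 (1 / ρ)) :=
      hreg1.continuousOn.comp (by fun_prop) hmap
    exact (continuousOn_const.mul (h1.sub continuousOn_const)).div_const _
  · have h1 : ContinuousOn (fun r => D (ρ * r)) (Icc 0 (1 / ρ)) :=
      hDc.comp (by fun_prop) hmap
    exact continuousOn_id.mul (continuousOn_const.mul (h1.mul continuousOn_const))
  · intro x hx
    have h1 := (((hud _ (hmap' x hx)).comp x (hlin x)).sub_const (u 0)).const_mul p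
      |>.div_const (u 0)
    refine henon_hd h1 (fun s => by simp) ?_
    ring
  · intro x hx
    have h1 := ((hGd _ (hmap' x hx)).comp x (hlin x)).const_mul (p / u 0)
    have e : (fun s => s * (p / u 0 * (D (ρ * s) * ρ))) =
      fun s => p / u 0 * ((fun s => s * D s) ∘ fun s => ρ * s) s := by
      funext s; simp only [Function.comp]; ring
    rw [e]
    refine henon_hd h1 (fun s => by simp) ?_
    rw [hone]
    have hux : 0 < u (ρ * x) := hpos _ ⟨(hmap' x hx).1.le, (hmap' x hx).2⟩
    have e1 : (u (ρ * x) / u 0) ^ p = u (ρ * x) ^ (p - 1) * u (ρ * x) / (u 0 ^ (p - 1) * u 0) := by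
      rw [Real.div_rpow hux.le hu0.le]
      congr 1
      · rw [Real.rpow_sub_one hux.ne']; field_simp
      · rw [Real.rpow_sub_one hu0.ne']; field_simp
    rw [e1, Real.mul_rpow hρ0.le hx.1.le]
    have e2 : ρ ^ (2 + α) = ρ * ρ ^ (1 + α) := by
      rw [show 2 + α = 1 + (1 + α) by ring, Real.rpow_add hρ0, Real.rpow_one]
    have hq : 0 < u 0 ^ (p - 1) := by positivity
    rw [e2] at hρβ
    field_simp
    linear_combination x ^ (1 + α) * hρβ
  · intro x hx
    rw [hone]
    refine div_pos (hpos _ ⟨mul_nonneg hρ0.le hx.1, ?_⟩) hu0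
    have := hx.2
    rw [lt_div_iff₀ hρ0] at this
    linarith


/-- The rescalings `ũ_p(r) = p (u_p(ρ_p r) - u_p(0))/u_p(0)` of the positive
least-energy radial solution of the Hénon problem converge in `C¹_loc([0,∞))` to
`U(r) = log( 4(2+α)⁴ / (2(2+α)² + r^{2+α})² )` as `p → ∞`. -/
theorem henon_positive_rescaled_convergence
    (α : ℝ) (hα : 0 ≤ α) (u : ℝ → ℝ → ℝ) (ρ : ℝ → ℝ)
    (hreg1 : ∀ p : ℝ, 1 < p → ContDiffOn ℝ 1 (u p) (Icc 0 1))
    (hreg2 : ∀ p : ℝ, 1 < p → ContDiffOn ℝ 2 (u p) (Ioo 0 1))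
    (heq : ∀ p : ℝ, 1 < p → ∀ r ∈ Ioo (0:ℝ) 1,
      deriv (fun s => s * deriv (u p) s) r + r ^ (1 + α) * |u p r| ^ (p - 1) * u p r = 0)
    (hderiv0 : ∀ p : ℝ, 1 < p → deriv (u p) 0 = 0)
    (hbdry : ∀ p : ℝ, 1 < p → u p 1 = 0)
    (hpos : ∀ p : ℝ, 1 < p → ∀ r ∈ Ico (0:ℝ) 1, 0 < u p r)
    (hρ : ∀ p : ℝ, ρ p = (p * u p 0 ^ (p - 1)) ^ (-(1 / (2 + α))))
    (ut : ℝ → ℝ → ℝ)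
    (hut : ∀ p r : ℝ, ut p r = p * (u p (ρ p * r) - u p 0) / u p 0)
    (U : ℝ → ℝ)
    (hU : ∀ r : ℝ, U r = Real.log (4 * (2 + α) ^ 4 / (2 * (2 + α) ^ 2 + r ^ (2 + α)) ^ 2)) :
    ∀ K : Set ℝ, IsCompact K → K ⊆ Ici 0 →
      (∃ pK : ℝ, ∀ p > pK, ∀ r ∈ K, r < 1 / ρ p) ∧
      TendstoUniformlyOn (fun p r => ut p r) U atTop K ∧
      TendstoUniformlyOn (fun p r => deriv (ut p) r) (deriv U) atTop K := by
  intro K hK hK0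
  obtain ⟨hU1, hU2, hU3, hU4, hU5⟩ := henon_U_facts hα hU
  obtain ⟨R, hR, hKR⟩ : ∃ R : ℝ, 0 < R ∧ ∀ r ∈ K, r < R := by
    obtain ⟨B, hB⟩ := hK.bddAbove
    refine ⟨max B 0 + 1, by positivity, fun r hr => ?_⟩
    have := hB hr
    have := le_max_left B 0
    linarith
  set M := R ^ (2 + α) / (2 + α) ^ 2 with hM
  have hM0 : 0 ≤ M := by positivity
  set C1 := R ^ α * R ^ 2 * exp ((R ^ α + 1) * R) with hC1
  set C2 := R ^ α * (R + R ^ α * R ^ 2 * exp ((R ^ α + 1) * R)) with hC2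
  have hutf : ∀ p, ut p = fun r => p * (u p (ρ p * r) - u p 0) / u p 0 :=
    fun p => funext (hut p)
  -- main estimates
  have key : ∀ p, 1 < p → M < p → R < 1 / ρ p ∧
      (∀ r ∈ K, |ut p r - U r| ≤ M ^ 2 / (p - M) * C1) ∧
      (∀ r ∈ K, |deriv (ut p) r - deriv U r| ≤ M ^ 2 / (p - M) * C2) := by
    intro p hp hMp
    have hp0 : 0 < p := by linarith
    obtain ⟨hρ0, w', a1, a2, a3, a4, a5⟩ := henon_rescale hp hα (hreg1 p hp) (hreg2 p hp)
      (heq p hp) (hpos p hp) (hρ p)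
    have hu0 : 0 < u p 0 := hpos p hp 0 (by simp)
    rw [← hutf p] at a1 a3
    simp only [← hut] at a4 a5
    have hw0 : ut p 0 = 0 := by rw [hut]; simp
    have hb := henon_bounds (F := fun x => (1 + ut p x / p) ^ p) hα a1 a2 a3 a4 hw0
      (fun x hx => rpow_nonneg (a5 x ⟨hx.1.le, hx.2⟩).le _)
      (fun x hx hx0 => Real.rpow_le_one (a5 x ⟨hx.1.le, hx.2⟩).le
        (by have := div_nonpos_of_nonpos_of_nonneg hx0 hp0.le; linarith) hp0.le)
    have hRT : R < 1 / ρ p := by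
      by_contra hc
      push Not at hc
      have hT0 : 0 < 1 / ρ p := by positivity
      have h1 := (hb (1 / ρ p) ⟨hT0.le, le_rfl⟩).2
      have h2 : ut p (1 / ρ p) = -p := by
        rw [hut, mul_one_div_cancel hρ0.ne', hbdry p hp]; field_simp; ring
      have h3 : (1 / ρ p) ^ (2 + α) / (2 + α) ^ 2 ≤ M := by
        rw [hM]; gcongr
      rw [h2] at h1
      linarith
    have hsub : Icc 0 R ⊆ Icc 0 (1 / ρ p) := Icc_subset_Icc_right hRT.le
    have hε : 0 ≤ M ^ 2 / (p - M) := div_nonneg (sq_nonneg _) (by linarith)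
    have hUc : ContinuousOn U (Icc 0 R) :=
      fun x hx => (hU1 x hx.1).continuousAt.continuousWithinAt
    have hs := henon_stab (d := fun x => ut p x - U x) (d' := fun x => w' x - henonU' α x)
      (F := fun x => -((1 + ut p x / p) ^ p - exp (U x))) hα hR hε
      ((a1.mono hsub).sub hUc)
      (by
        have := (a2.mono hsub).sub (hU3.mono (Icc_subset_Ici_self : Icc 0 R ⊆ Ici 0))
        refine this.congr fun x _ => ?_
        simp only [Pi.sub_apply]; ring)
      (fun x hx => (a3 x ⟨hx.1, hx.2.trans hRT⟩).sub (hU1 x hx.1.le))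
      (by
        intro x hx
        have := (a4 x ⟨hx.1, hx.2.trans hRT⟩).sub (hU2 x hx.1)
        refine henon_hd this (fun s => ?_) ?_
        · simp only [Pi.sub_apply]; ring
        · ring)
      (by simp [hw0, hU4])
      (by
        intro x hx
        have hx' : x ∈ Icc (0:ℝ) (1 / ρ p) := ⟨hx.1.le, (hx.2.trans hRT).le⟩
        obtain ⟨b1, b2⟩ := hb x hx'
        have b3 : -M ≤ ut p x := by
          refine le_trans ?_ b2
          have h1 := hx.1.le
          have h2 := hx.2.le
          rw [hM]; gcongr
        have c1 := henon_exp hMp b3 b1 hp0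
        have c2 := henon_exp_lip b1 (hU5 x hx.1.le)
        rw [abs_neg]
        have c3 := abs_sub_le ((1 + ut p x / p) ^ p) (exp (ut p x)) (exp (U x))
        linarith)
    refine ⟨hRT, fun r hr => hs.1 r ⟨hK0 hr, (hKR r hr).le⟩, fun r hr => ?_⟩
    rcases (show (0:ℝ) ≤ r from hK0 hr).eq_or_lt with h0 | h0
    · have e1 : deriv (ut p) r = 0 := by
        rw [← h0, hutf]
        have : (fun r => p * (u p (ρ p * r) - u p 0) / u p 0) =
          fun r => (p / u p 0) * (u p (ρ p * r) - u p 0) := by funext r; ring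
        rw [this, deriv_const_mul_field, deriv_sub_const, deriv_comp_mul_left]
        simp [hderiv0 p hp]
      have e2 : deriv U r = 0 := by
        rw [(hU1 r h0.le).deriv, ← h0, henonU', Real.zero_rpow (by linarith)]; simp
      rw [e1, e2]
      simp only [sub_zero, abs_zero]
      positivity
    · have hr' : r ∈ Ioo (0:ℝ) R := ⟨h0, hKR r hr⟩
      rw [(a3 r ⟨h0, hr'.2.trans hRT⟩).deriv, (hU1 r h0.le).deriv]
      exact hs.2 r hr'
  have hlim : ∀ C : ℝ, Tendsto (fun p => M ^ 2 / (p - M) * C) atTop (nhds 0) := by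
    intro C
    have h1 : Tendsto (fun p : ℝ => p - M) atTop atTop :=
      tendsto_atTop_add_const_right _ (-M) tendsto_id
    have := (h1.const_div_atTop (M ^ 2)).mul_const C
    simpa using this
  refine ⟨⟨max 1 M, fun p hp r hr => ?_⟩, ?_, ?_⟩
  · exact (hKR r hr).trans
      (key p ((le_max_left _ _).trans_lt hp) ((le_max_right _ _).trans_lt hp)).1
  · rw [Metric.tendstoUniformlyOn_iff]
    intro ε hε
    filter_upwards [eventually_gt_atTop 1, eventually_gt_atTop M,
      (hlim C1).eventually (gt_mem_nhds hε)] with p h1 h2 h3 r hr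
    rw [dist_comm, Real.dist_eq]
    exact ((key p h1 h2).2.1 r hr).trans_lt h3
  · rw [Metric.tendstoUniformlyOn_iff]
    intro ε hε
    filter_upwards [eventually_gt_atTop 1, eventually_gt_atTop M,
      (hlim C2).eventually (gt_mem_nhds hε)] with p h1 h2 h3 r hr
    rw [dist_comm, Real.dist_eq]
    exact ((key p h1 h2).2.2 r hr).trans_lt h3
end

section
/- Let ℓ > 0, γ > 0, δ > 0 and define Z(r) := log( 2(2+γ)²·δ·r^γ / (δ + r^{2+γ})² ). Then Z(ℓ) = 0 and Z′(ℓ) = 0 hold simultaneously if and only if γ = √(2ℓ² + 4) − 2 and δ = ((γ+4)/γ)·ℓ^{2+γ}. -/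
open Real Set Filter MeasureTheory

/-- For `ℓ, γ, δ > 0` and
`Z(r) = log( 2(2+γ)²δ r^γ / (δ + r^{2+γ})² )`, the conditions `Z(ℓ) = 0` and `Z′(ℓ) = 0`
hold simultaneously iff `γ = √(2ℓ²+4) − 2` and `δ = ((γ+4)/γ) ℓ^{2+γ}`. -/
theorem singular_liouville_normalization
    (ℓ γ δ : ℝ) (hℓ : 0 < ℓ) (hγ : 0 < γ) (hδ : 0 < δ)
    (Z : ℝ → ℝ)
    (hZ : ∀ r : ℝ, Z r = Real.log (2 * (2 + γ) ^ 2 * δ * r ^ γ / (δ + r ^ (2 + γ)) ^ 2)) :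
    (Z ℓ = 0 ∧ deriv Z ℓ = 0) ↔
      (γ = Real.sqrt (2 * ℓ ^ 2 + 4) - 2 ∧ δ = (γ + 4) / γ * ℓ ^ (2 + γ)) := by
  have hx : 0 < ℓ ^ γ := Real.rpow_pos_of_pos hℓ γ
  have hP : ℓ ^ (2 + γ) = ℓ ^ 2 * ℓ ^ γ := by
    rw [Real.rpow_add hℓ, Real.rpow_two]
  have h1 : HasDerivAt (fun r : ℝ => r ^ γ) (γ * ℓ ^ (γ - 1)) ℓ :=
    Real.hasDerivAt_rpow_const (Or.inl hℓ.ne')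
  have h2 : HasDerivAt (fun r : ℝ => r ^ (2 + γ)) ((2 + γ) * ℓ ^ (2 + γ - 1)) ℓ :=
    Real.hasDerivAt_rpow_const (Or.inl hℓ.ne')
  rw [Real.rpow_sub_one hℓ.ne'] at h1 h2
  rw [hP] at h2
  have hZf : Z = fun r => Real.log (2 * (2 + γ) ^ 2 * δ * r ^ γ / (δ + r ^ (2 + γ)) ^ 2) :=
    funext hZ
  have hD : 0 < δ + ℓ ^ (2 + γ) := by rw [hP]; positivity
  have hN : 0 < 2 * (2 + γ) ^ 2 * δ * ℓ ^ γ := by positivity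
  have h3 := (((h1.const_mul (2 * (2 + γ) ^ 2 * δ)).fun_div ((h2.const_add δ).fun_pow 2)
    (pow_pos hD 2).ne').log (div_pos hN (pow_pos hD 2)).ne')
  have hd : deriv Z ℓ = (γ * δ - (γ + 4) * (ℓ ^ 2 * ℓ ^ γ)) / (ℓ * (δ + ℓ ^ 2 * ℓ ^ γ)) := by
    rw [hZf, h3.deriv, hP]
    rw [hP] at hD
    generalize ℓ ^ γ = x at *
    have := hD.ne'
    have : 2 + γ ≠ 0 := by positivity
    field_simp
    push_cast
    ring
  have hd0 : deriv Z ℓ = 0 ↔ γ * δ = (γ + 4) * (ℓ ^ 2 * ℓ ^ γ) := by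
    rw [hd, div_eq_zero_iff, sub_eq_zero]
    have : ℓ * (δ + ℓ ^ 2 * ℓ ^ γ) ≠ 0 := by positivity
    tauto
  have hz0 : Z ℓ = 0 ↔ 2 * (2 + γ) ^ 2 * δ * ℓ ^ γ = (δ + ℓ ^ 2 * ℓ ^ γ) ^ 2 := by
    rw [hZ, ← hP, ← div_eq_one_iff_eq (pow_pos hD 2).ne']
    constructor
    · intro h
      exact Real.eq_one_of_pos_of_log_eq_zero (div_pos hN (pow_pos hD 2)) h
    · intro h
      rw [h, Real.log_one]
  have hg : γ = Real.sqrt (2 * ℓ ^ 2 + 4) - 2 ↔ γ * (γ + 4) = 2 * ℓ ^ 2 := by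
    rw [eq_sub_iff_add_eq, eq_comm, Real.sqrt_eq_iff_mul_self_eq (by positivity) (by positivity)]
    constructor <;> intro h <;> linarith
  have hdel : δ = (γ + 4) / γ * ℓ ^ (2 + γ) ↔ γ * δ = (γ + 4) * (ℓ ^ 2 * ℓ ^ γ) := by
    rw [hP, div_mul_eq_mul_div, eq_div_iff hγ.ne', mul_comm δ]
  rw [hd0, hz0, hg, hdel]
  refine and_congr_left fun h => ?_
  generalize ℓ ^ γ = x at *
  have hs : γ * (δ + ℓ ^ 2 * x) = 2 * (γ + 2) * (ℓ ^ 2 * x) := by linarith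
  have key : γ ^ 2 * (2 * (2 + γ) ^ 2 * δ * x - (δ + ℓ ^ 2 * x) ^ 2)
      = 2 * (2 + γ) ^ 2 * (ℓ ^ 2 * x ^ 2) * (γ * (γ + 4) - 2 * ℓ ^ 2) := by
    have e : (γ * (δ + ℓ ^ 2 * x)) ^ 2 = (2 * (γ + 2) * (ℓ ^ 2 * x)) ^ 2 := by rw [hs]
    linear_combination 2 * (2 + γ) ^ 2 * x * γ * h - e
  have c1 : γ ^ 2 ≠ 0 := by positivity
  have c2 : 2 * (2 + γ) ^ 2 * (ℓ ^ 2 * x ^ 2) ≠ 0 := by positivity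
  rw [← sub_eq_zero, ← sub_eq_zero (a := γ * (γ + 4))]
  constructor
  · intro h0
    rw [h0, mul_zero] at key
    exact (mul_eq_zero.mp key.symm).resolve_left c2
  · intro h0
    rw [h0, mul_zero] at key
    exact (mul_eq_zero.mp key).resolve_left c1
end

section
/- Set ε_p := (p·v_p(0)^{p−1})^{−1/2} and ṽ_p(t) := p·(v_p(ε_p·t) − v_p(0))/v_p(0) for 0 ≤ t < 1/ε_p, and let V(t) := log( 64/(8+t²)² ). Assume that as p → ∞: ε_p → 0 and ṽ_p → V uniformly on every compact subset of [0,∞) (for p large enough that the compact set lies in [0,1/ε_p)). Assume moreover that −1 < ν₁(p) < 0 for every p. Then ν₁(p) → −1 as p → ∞. -/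
open Real Set Filter MeasureTheory

lemma st_deriv_one {x : ℝ} (hx : 1 ≤ x) : deriv smoothTransition x = 0 := by
  apply IsLocalMax.deriv_eq_zero
  refine Filter.Eventually.of_forall fun y => ?_
  rw [smoothTransition.one_of_one_le hx]
  exact smoothTransition.le_one y

lemma st_deriv_zero {x : ℝ} (hx : x ≤ 0) : deriv smoothTransition x = 0 := by
  apply IsLocalMin.deriv_eq_zero
  refine Filter.Eventually.of_forall fun y => ?_
  rw [smoothTransition.zero_of_nonpos hx]
  exact smoothTransition.nonneg y

lemma st_deriv_cont : Continuous (deriv smoothTransition) :=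
  (smoothTransition.contDiff (n := 1)).continuous_deriv le_rfl

lemma st_deriv_bound : ∃ C : ℝ, 0 < C ∧ ∀ x, |deriv smoothTransition x| ≤ C := by
  obtain ⟨C, hC⟩ := (isCompact_Icc (a := (0:ℝ)) (b := 1)).exists_bound_of_continuousOn
    st_deriv_cont.continuousOn
  refine ⟨max C 1, by positivity, fun x => ?_⟩
  by_cases h : x ∈ Icc (0:ℝ) 1
  · exact (hC x h).trans (le_max_left _ _)
  · have : deriv smoothTransition x = 0 := by
      by_cases h0 : x ≤ 0
      · exact st_deriv_zero h0
      · apply st_deriv_one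
        by_contra h1
        exact h ⟨by linarith, by linarith⟩
    rw [this]; simp

/-- cut-off -/
noncomputable def cutE (R t : ℝ) : ℝ := smoothTransition (R * t - 1) * smoothTransition (2 - t / R)

/-- derivative of the cut-off -/
noncomputable def cutD (R t : ℝ) : ℝ :=
  R * deriv smoothTransition (R * t - 1) * smoothTransition (2 - t / R)
    - 1 / R * (smoothTransition (R * t - 1) * deriv smoothTransition (2 - t / R))

lemma cutE_contDiff (R : ℝ) : ContDiff ℝ (⊤ : ℕ∞) (cutE R) := by
  unfold cutE
  refine ContDiff.mul ?_ ?_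
  · exact (smoothTransition.contDiff (n := ⊤)).comp (by fun_prop)
  · exact (smoothTransition.contDiff (n := ⊤)).comp (by fun_prop)

lemma cutE_deriv (R t : ℝ) : HasDerivAt (cutE R) (cutD R t) t := by
  have hS : ∀ x, HasDerivAt smoothTransition (deriv smoothTransition x) x := fun x =>
    ((smoothTransition.contDiff (n := 1)).differentiable (by norm_num) x).hasDerivAt
  have h1 : HasDerivAt (fun t => R * t - 1) R t := by
    simpa using ((hasDerivAt_id t).const_mul R).sub_const 1
  have h2 : HasDerivAt (fun t => 2 - t / R) (-(1 / R)) t := by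
    simpa using ((hasDerivAt_id t).div_const R).const_sub 2
  have := ((hS (R * t - 1)).comp t h1).mul ((hS (2 - t / R)).comp t h2)
  unfold cutE cutD
  refine this.congr_deriv ?_
  simp only [Function.comp]; ring

lemma cutD_cont (R : ℝ) : Continuous (cutD R) := by
  unfold cutD
  have := st_deriv_cont
  have := smoothTransition.continuous
  fun_prop

lemma cutD_bound {C : ℝ} (hC : 0 < C) (hS : ∀ x, |deriv smoothTransition x| ≤ C)
    {R t : ℝ} (hR : 2 ≤ R) (ht : 0 < t) (ht2 : t ≤ 2 * R) :
    t * cutD R t ^ 2 * (t / (8 + t ^ 2)) ^ 2 ≤ 4 * C ^ 2 / R * (1 / (1 + t ^ 2)) := by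
  have hR0 : 0 < R := by linarith
  have hrhs : 0 ≤ 4 * C ^ 2 / R * (1 / (1 + t ^ 2)) := by positivity
  have e1 : t * cutD R t ^ 2 * (t / (8 + t ^ 2)) ^ 2 = (cutD R t) ^ 2 * (t ^ 3 / (8 + t ^ 2) ^ 2) := by
    field_simp
  rw [e1]
  have habs : ∀ x, |smoothTransition x| ≤ 1 := fun x => by
    rw [abs_of_nonneg (smoothTransition.nonneg x)]; exact smoothTransition.le_one x
  have hprod : ∀ x y, (deriv smoothTransition x * smoothTransition y) ^ 2 ≤ C ^ 2 := fun x y => by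
    rw [← sq_abs, abs_mul]
    have : |deriv smoothTransition x| * |smoothTransition y| ≤ C * 1 :=
      mul_le_mul (hS x) (habs y) (abs_nonneg _) hC.le
    have h0 : 0 ≤ |deriv smoothTransition x| * |smoothTransition y| := by positivity
    nlinarith
  by_cases h1 : R * t ≤ 2
  · have ht1 : t ≤ 1 := by nlinarith
    have hz : deriv smoothTransition (2 - t / R) = 0 := by
      apply st_deriv_one
      have : t / R ≤ 1 := by rw [div_le_one hR0]; linarith
      linarith
    have hd : cutD R t ^ 2 ≤ R ^ 2 * C ^ 2 := by
      unfold cutD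
      rw [hz]
      have := hprod (R * t - 1) (2 - t / R)
      calc _ = R ^ 2 * (deriv smoothTransition (R * t - 1) * smoothTransition (2 - t / R)) ^ 2 := by ring
        _ ≤ _ := by gcongr
    have h3 : R ^ 3 * t ^ 3 ≤ 8 := by
      have : (R * t) ^ 3 ≤ 2 ^ 3 := by gcongr
      nlinarith
    calc _ ≤ R ^ 2 * C ^ 2 * (t ^ 3 / (8 + t ^ 2) ^ 2) := by gcongr
      _ = C ^ 2 / R * (R ^ 3 * t ^ 3 / (8 + t ^ 2) ^ 2) := by field_simp
      _ ≤ C ^ 2 / R * (8 / (8 + t ^ 2) ^ 2) := by gcongr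
      _ ≤ C ^ 2 / R * (4 * (1 / (1 + t ^ 2))) := by
          gcongr
          rw [mul_one_div, div_le_div_iff₀ (by positivity) (by positivity)]
          nlinarith [sq_nonneg t, sq_nonneg (t ^ 2)]
      _ = _ := by ring
  · push Not at h1
    have hz : deriv smoothTransition (R * t - 1) = 0 := st_deriv_one (by linarith)
    by_cases h2 : t ≤ R
    · have hz2 : deriv smoothTransition (2 - t / R) = 0 := by
        apply st_deriv_one
        have : t / R ≤ 1 := by rw [div_le_one hR0]; linarith
        linarith
      have : cutD R t = 0 := by unfold cutD; rw [hz, hz2]; ring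
      rw [this]; simpa using hrhs
    · push Not at h2
      have hd : cutD R t ^ 2 ≤ C ^ 2 / R ^ 2 := by
        unfold cutD
        rw [hz]
        have := hprod (2 - t / R) (R * t - 1)
        calc _ = (deriv smoothTransition (2 - t / R) * smoothTransition (R * t - 1)) ^ 2 / R ^ 2 := by
              ring
          _ ≤ _ := by gcongr
      calc _ ≤ C ^ 2 / R ^ 2 * (t ^ 3 / (8 + t ^ 2) ^ 2) := by gcongr
        _ ≤ C ^ 2 / R ^ 2 * (t * (1 / (1 + t ^ 2))) := by
          gcongr
          rw [mul_one_div, div_le_div_iff₀ (by positivity) (by positivity)]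
          have : t ^ 2 * (1 + t ^ 2) ≤ (8 + t ^ 2) ^ 2 := by nlinarith [sq_nonneg t]
          nlinarith
        _ ≤ C ^ 2 / R ^ 2 * (2 * R * (1 / (1 + t ^ 2))) := by gcongr
        _ = 2 * C ^ 2 / R * (1 / (1 + t ^ 2)) := by field_simp
        _ ≤ _ := by gcongr; norm_num

lemma limit_test (δ : ℝ) (hδ : 0 < δ) : ∃ a b : ℝ, ∃ φ : ℝ → ℝ, 0 < a ∧ a < b ∧
    ContDiff ℝ (⊤ : ℕ∞) φ ∧ (∀ t, t ≤ a → φ t = 0) ∧ (∀ t, b ≤ t → φ t = 0) ∧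
    0 < (∫ t in a..b, φ t ^ 2 / t) ∧
    (∫ t in a..b, t * deriv φ t ^ 2) - (∫ t in a..b, t * (64 / (8 + t ^ 2) ^ 2) * φ t ^ 2)
      ≤ (-1 + δ) * ∫ t in a..b, φ t ^ 2 / t := by
  obtain ⟨C, hC, hS⟩ := st_deriv_bound
  obtain ⟨R, hR⟩ : ∃ R : ℝ, 2 ≤ R ∧ 4 * C ^ 2 * π * 144 / δ ≤ R :=
    ⟨max 2 _, le_max_left _ _, le_max_right _ _⟩
  obtain ⟨hR2, hRδ⟩ := hR
  have hR0 : 0 < R := by linarith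
  have hRi : 1 / R ≤ 1 := by rw [div_le_one hR0]; linarith
  have ha : 0 < 1 / R := by positivity
  have hab : 1 / R < 2 * R := by linarith
  set ψ : ℝ → ℝ := fun t => t / (8 + t ^ 2) with hψ
  have h8 : ∀ t : ℝ, 8 + t ^ 2 ≠ 0 := fun t => by positivity
  have hψd : ∀ t, HasDerivAt ψ ((8 - t ^ 2) / (8 + t ^ 2) ^ 2) t := fun t => by
    have h1 : HasDerivAt (fun t : ℝ => 8 + t ^ 2) (2 * t) t := by
      simpa using ((hasDerivAt_id t).pow 2).const_add 8
    refine ((hasDerivAt_id t).div h1 (h8 t)).congr_deriv ?_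
    simp only [id]; ring
  set φ : ℝ → ℝ := fun t => cutE R t * ψ t with hφ
  have hφs : ContDiff ℝ (⊤ : ℕ∞) φ := by
    refine (cutE_contDiff R).mul ?_
    exact contDiff_id.div (by fun_prop) h8
  have hφd : ∀ t, HasDerivAt φ (cutD R t * ψ t + cutE R t * ((8 - t ^ 2) / (8 + t ^ 2) ^ 2)) t :=
    fun t => (cutE_deriv R t).mul (hψd t)
  have cE : Continuous (cutE R) := (cutE_contDiff R).continuous
  have cD := cutD_cont R
  have cψ : Continuous ψ := by rw [hψ]; exact continuous_id.div (by fun_prop) h8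
  have cφ : Continuous φ := cE.mul cψ
  have cφ' : Continuous (deriv φ) := hφs.continuous_deriv (by norm_cast)
  have hE0 : ∀ t, t ≤ 1 / R → cutE R t = 0 := fun t ht => by
    unfold cutE
    rw [smoothTransition.zero_of_nonpos (x := R * t - 1), zero_mul]
    rw [le_div_iff₀ hR0] at ht; linarith
  have hE1 : ∀ t, 2 * R ≤ t → cutE R t = 0 := fun t ht => by
    unfold cutE
    rw [smoothTransition.zero_of_nonpos (x := 2 - t / R), mul_zero]
    rw [← le_div_iff₀ hR0] at ht; linarith
  have hpos : ∀ t ∈ uIcc (1 / R) (2 * R), 0 < t := fun t ht => by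
    rw [uIcc_of_le hab.le] at ht; exact ha.trans_le ht.1
  have i1 : IntervalIntegrable (fun t => t * deriv φ t ^ 2) volume (1 / R) (2 * R) :=
    (by fun_prop : Continuous _).intervalIntegrable _ _
  have cpot : Continuous fun t : ℝ => 64 / (8 + t ^ 2) ^ 2 :=
    continuous_const.div (by fun_prop) fun t => by positivity
  have i2 : IntervalIntegrable (fun t => t * (64 / (8 + t ^ 2) ^ 2) * φ t ^ 2) volume (1 / R) (2 * R) :=
    (by fun_prop : Continuous _).intervalIntegrable _ _
  have i3 : IntervalIntegrable (fun t => φ t ^ 2 / t) volume (1 / R) (2 * R) := by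
    apply ContinuousOn.intervalIntegrable
    exact (by fun_prop : Continuous fun t => φ t ^ 2).continuousOn.div continuousOn_id
      fun t ht => (hpos t ht).ne'
  have i4 : IntervalIntegrable (fun t => t * cutD R t ^ 2 * ψ t ^ 2) volume (1 / R) (2 * R) :=
    (by fun_prop : Continuous _).intervalIntegrable _ _
  -- exact derivative identity
  set G : ℝ → ℝ := fun t => t * ((8 - t ^ 2) / (8 + t ^ 2) ^ 2) * (cutE R t ^ 2 * ψ t) with hG
  have hGd : ∀ t ∈ uIcc (1 / R) (2 * R), HasDerivAt G (t * deriv φ t ^ 2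
      - t * (64 / (8 + t ^ 2) ^ 2) * φ t ^ 2 + φ t ^ 2 / t - t * cutD R t ^ 2 * ψ t ^ 2) t := by
    intro t ht
    have ht0 := hpos t ht
    have h1 : HasDerivAt (fun t : ℝ => 8 + t ^ 2) (2 * t) t := by
      simpa using ((hasDerivAt_id t).pow 2).const_add 8
    have h2 : HasDerivAt (fun t : ℝ => 8 - t ^ 2) (-(2 * t)) t := by
      simpa using ((hasDerivAt_id t).pow 2).const_sub 8
    have h3 := (hasDerivAt_id t).mul (h2.div (h1.pow 2) (pow_ne_zero 2 (h8 t)))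
    have h4 := h3.mul (((cutE_deriv R t).pow 2).mul (hψd t))
    refine h4.congr_deriv ?_
    rw [(hφd t).deriv]
    simp only [hφ, hψ, id, Pi.mul_apply, Pi.pow_apply, Pi.div_apply]
    have := h8 t
    field_simp
    ring
  have hFTC := intervalIntegral.integral_eq_sub_of_hasDerivAt hGd (((i1.sub i2).add i3).sub i4)
  have hG0 : G (2 * R) - G (1 / R) = 0 := by
    simp only [hG, hE0 _ le_rfl, hE1 _ le_rfl]; ring
  rw [hG0, intervalIntegral.integral_sub ((i1.sub i2).add i3) i4,
    intervalIntegral.integral_add (i1.sub i2) i3, intervalIntegral.integral_sub i1 i2] at hFTC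
  -- numerator bound
  have hnum : (∫ t in (1 / R)..(2 * R), t * cutD R t ^ 2 * ψ t ^ 2) ≤ 4 * C ^ 2 / R * π := by
    have ci : Continuous fun t : ℝ => 4 * C ^ 2 / R * (1 / (1 + t ^ 2)) :=
      continuous_const.mul (continuous_const.div (by fun_prop) fun t => by positivity)
    calc _ ≤ ∫ t in (1 / R)..(2 * R), 4 * C ^ 2 / R * (1 / (1 + t ^ 2)) := by
          apply intervalIntegral.integral_mono_on hab.le i4 (ci.intervalIntegrable _ _)
          intro t ht
          exact cutD_bound hC hS hR2 (ha.trans_le ht.1) ht.2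
      _ = 4 * C ^ 2 / R * (arctan (2 * R) - arctan (1 / R)) := by
          rw [intervalIntegral.integral_const_mul, integral_one_div_one_add_sq]
      _ ≤ _ := by
          gcongr
          linarith [arctan_lt_pi_div_two (2 * R), neg_pi_div_two_lt_arctan (1 / R)]
  have hden : 1 / 144 ≤ ∫ t in (1 / R)..(2 * R), φ t ^ 2 / t := by
    have hsub : uIcc (1:ℝ) 2 ⊆ uIcc (1 / R) (2 * R) := by
      rw [uIcc_of_le hab.le, uIcc_of_le (by norm_num)]
      exact Icc_subset_Icc hRi (by linarith)
    calc (1:ℝ) / 144 = ∫ t in (1:ℝ)..2, (1:ℝ) / 144 := by simp; norm_num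
      _ ≤ ∫ t in (1:ℝ)..2, φ t ^ 2 / t := by
          apply intervalIntegral.integral_mono_on (by norm_num) (by simp) (i3.mono_set hsub)
          intro t ht
          have h1 : cutE R t = 1 := by
            unfold cutE
            rw [smoothTransition.one_of_one_le, smoothTransition.one_of_one_le, one_mul]
            · have : t / R ≤ 1 := by rw [div_le_one hR0]; linarith [ht.2]
              linarith
            · nlinarith [ht.1]
          have ht0 : 0 < t := by linarith [ht.1]
          have : φ t ^ 2 / t = t / (8 + t ^ 2) ^ 2 := by
            simp only [hφ, hψ, h1]; field_simp
          rw [this, div_le_div_iff₀ (by norm_num) (by positivity)]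
          have h3 : 8 + t ^ 2 ≤ 12 * t := by nlinarith [ht.1, ht.2]
          have h4 : 8 + t ^ 2 ≤ 12 := by nlinarith [ht.1, ht.2]
          nlinarith [mul_le_mul h3 h4 (by positivity) (by positivity)]
      _ ≤ _ := by
          apply intervalIntegral.integral_mono_interval hRi (by norm_num) (by linarith) _ i3
          refine (ae_restrict_mem measurableSet_Ioc).mono fun t ht => ?_
          have : 0 < t := ha.trans ht.1
          simp only [Pi.zero_apply]; positivity
  refine ⟨1 / R, 2 * R, φ, ha, hab, hφs, fun t ht => by simp [hφ, hE0 t ht],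
    fun t ht => by simp [hφ, hE1 t ht], by linarith, ?_⟩
  have hfin : 4 * C ^ 2 / R * π ≤ δ * (1 / 144) := by
    rw [div_le_iff₀ hδ] at hRδ
    rw [div_mul_eq_mul_div, div_le_iff₀ hR0]
    linarith
  have : δ * (1 / 144) ≤ δ * ∫ t in (1 / R)..(2 * R), φ t ^ 2 / t := by gcongr
  linarith

lemma scale_integral {f : ℝ → ℝ} {e a b : ℝ} (he : 0 < e) (ha : 0 < a) (hab : a < b) (heb : e * b < 1)
    (h0 : ∀ t, t ≤ e * a → f t = 0) (h1 : ∀ t, e * b ≤ t → f t = 0) :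
    ∫ t in Ioo (0:ℝ) 1, f t = e * ∫ s in a..b, f (e * s) := by
  rw [intervalIntegral.mul_integral_comp_mul_left,
    intervalIntegral.integral_of_le (by gcongr),
    setIntegral_eq_integral_of_forall_compl_eq_zero,
    setIntegral_eq_integral_of_forall_compl_eq_zero]
  · intro t ht
    by_cases h : t ≤ e * a
    · exact h0 t h
    · exact h1 t (by by_contra h'; exact ht ⟨by linarith, by linarith⟩)
  · intro t ht
    by_cases h : t ≤ e * a
    · exact h0 t h
    · refine h1 t ?_
      by_contra h'
      have : 0 < e * a := by positivity
      exact ht ⟨by linarith, by linarith⟩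

theorem laneEmden_first_singular_eigenvalue_limit
    (v : ℝ → ℝ → ℝ) (ν : ℝ → ℝ) (ε : ℝ → ℝ)
    (hreg1 : ∀ p : ℝ, 1 < p → ContDiffOn ℝ 1 (v p) (Icc 0 1))
    (hreg2 : ∀ p : ℝ, 1 < p → ContDiffOn ℝ 2 (v p) (Ioo 0 1))
    (heq : ∀ p : ℝ, 1 < p → ∀ t ∈ Ioo (0:ℝ) 1,
      deriv (fun s => s * deriv (v p) s) t + t * |v p t| ^ (p - 1) * v p t = 0)
    (hderiv0 : ∀ p : ℝ, 1 < p → deriv (v p) 0 = 0)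
    (hbdry : ∀ p : ℝ, 1 < p → v p 1 = 0)
    (hpos : ∀ p : ℝ, 1 < p → ∀ t ∈ Ico (0:ℝ) 1, 0 < v p t)
    (hν : ∀ p : ℝ, ν p = sInf {x : ℝ | ∃ φ : ℝ → ℝ,
      ContDiff ℝ (⊤ : ℕ∞) φ ∧ tsupport φ ⊆ Ioo (0:ℝ) 1 ∧ φ ≠ 0 ∧
      x = ((∫ t in Ioo (0:ℝ) 1, t * deriv φ t ^ 2) -
            p * ∫ t in Ioo (0:ℝ) 1, t * |v p t| ^ (p - 1) * φ t ^ 2) /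
          (∫ t in Ioo (0:ℝ) 1, φ t ^ 2 / t)})
    (hε : ∀ p : ℝ, ε p = (p * v p 0 ^ (p - 1)) ^ (-(1 / 2) : ℝ))
    (hε0 : Tendsto ε atTop (nhds 0))
    (hconv : ∀ K : Set ℝ, IsCompact K → K ⊆ Ici 0 →
      TendstoUniformlyOn (fun p t => p * (v p (ε p * t) - v p 0) / v p 0)
        (fun t => Real.log (64 / (8 + t ^ 2) ^ 2)) atTop K)
    (hbound : ∀ p : ℝ, 1 < p → -1 < ν p ∧ ν p < 0) :
    Tendsto ν atTop (nhds (-1)) := by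
  refine tendsto_order.2 ⟨fun c hc => ?_, fun c hc => ?_⟩
  · filter_upwards [eventually_gt_atTop (1:ℝ)] with p hp
    exact hc.trans (hbound p hp).1
  obtain ⟨a, b, φ, ha, hab, hφs, hφ0, hφ1, hD, hQ⟩ := limit_test ((c + 1) / 2) (by linarith)
  have hb : 0 < b := ha.trans hab
  have cφ : Continuous φ := hφs.continuous
  set D := ∫ t in a..b, φ t ^ 2 / t with hDdef
  have hεpos : ∀ p, 1 < p → 0 < ε p := fun p hp => by
    have := hpos p hp 0 (by simp)
    rw [hε]; positivity
  have hεsq : ∀ p, 1 < p → ε p ^ 2 * (p * v p 0 ^ (p - 1)) = 1 := fun p hp => by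
    have := hpos p hp 0 (by simp)
    have h0 : 0 < p * v p 0 ^ (p - 1) := by positivity
    rw [hε, ← rpow_natCast, ← rpow_mul h0.le]
    norm_num
    rw [rpow_neg_one, inv_mul_cancel₀]
    exact h0.ne'
  have hsmall : ∀ᶠ p in atTop, ε p * b < 1 := by
    have : Tendsto (fun p => ε p * b) atTop (nhds (0 * b)) := hε0.mul_const b
    rw [zero_mul] at this
    exact this.eventually_lt_const one_pos
  have hU := hconv (Icc a b) isCompact_Icc fun t ht => ha.le.trans ht.1
  have hsc : ∀ p, 1 < p → ε p * b < 1 → ∀ s ∈ Icc a b, ε p * s ∈ Ico (0:ℝ) 1 := by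
    intro p hp hpb s hs
    have h1 := hεpos p hp
    have h2 : 0 < s := ha.trans_le hs.1
    refine ⟨by positivity, lt_of_le_of_lt ?_ hpb⟩
    exact mul_le_mul_of_nonneg_left hs.2 h1.le
  have hlim : Tendsto (fun p => ∫ s in a..b, s * (v p (ε p * s) / v p 0) ^ (p - 1) * φ s ^ 2) atTop
      (nhds (∫ t in a..b, t * (64 / (8 + t ^ 2) ^ 2) * φ t ^ 2)) := by
    apply intervalIntegral.tendsto_integral_filter_of_dominated_convergence
      (fun t => |t| * rexp 1 * φ t ^ 2)
    · filter_upwards [eventually_gt_atTop (1:ℝ), hsmall] with p hp hpb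
      apply ContinuousOn.aestronglyMeasurable _ measurableSet_uIoc
      have hc : ContinuousOn (fun s => v p (ε p * s)) (uIoc a b) := by
        refine (hreg1 p hp).continuousOn.comp (by fun_prop) fun s hs => ?_
        rw [uIoc_of_le hab.le] at hs
        exact Ico_subset_Icc_self (hsc p hp hpb s (Ioc_subset_Icc_self hs))
      refine ((continuousOn_id).mul ((hc.div_const _).rpow_const ?_)).mul (by fun_prop)
      intro s hs; right; linarith
    · filter_upwards [eventually_gt_atTop (1:ℝ), hsmall,
        Metric.tendstoUniformlyOn_iff.1 hU 1 one_pos] with p hp hpb hclose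
      refine Eventually.of_forall fun s hs => ?_
      rw [uIoc_of_le hab.le] at hs
      have hs' := Ioc_subset_Icc_self hs
      have hv0 := hpos p hp 0 (by simp)
      have hvs := hpos p hp _ (hsc p hp hpb s hs')
      have hr : 0 < v p (ε p * s) / v p 0 := by positivity
      have hcl := hclose s hs'
      rw [Real.dist_eq, abs_lt] at hcl
      have hV : Real.log (64 / (8 + s ^ 2) ^ 2) ≤ 0 := by
        apply Real.log_nonpos (by positivity)
        rw [div_le_one (by positivity)]
        nlinarith [sq_nonneg s]
      have hw : p * (v p (ε p * s) / v p 0 - 1) ≤ 1 := by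
        have : p * (v p (ε p * s) / v p 0 - 1) = p * (v p (ε p * s) - v p 0) / v p 0 := by
          field_simp
        linarith
      have hle : (v p (ε p * s) / v p 0) ^ (p - 1) ≤ rexp 1 := by
        rw [rpow_def_of_pos hr]
        apply Real.exp_le_exp.2
        have hl := Real.log_le_sub_one_of_pos hr
        by_cases hx : v p (ε p * s) / v p 0 ≤ 1
        · have := Real.log_nonpos hr.le hx
          nlinarith
        · nlinarith
      have hnn : 0 ≤ (v p (ε p * s) / v p 0) ^ (p - 1) := by positivity
      rw [norm_mul, norm_mul, Real.norm_eq_abs, Real.norm_eq_abs, Real.norm_eq_abs,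
        abs_of_nonneg hnn, abs_of_nonneg (sq_nonneg (φ s))]
      gcongr
    · exact (by fun_prop : Continuous _).intervalIntegrable _ _
    · refine Eventually.of_forall fun s hs => ?_
      rw [uIoc_of_le hab.le] at hs
      have hs' := Ioc_subset_Icc_self hs
      refine Tendsto.mul_const _ (Tendsto.const_mul _ ?_)
      have ht := hU.tendsto_at hs'
      have hpt : Tendsto (fun p => p * (v p (ε p * s) / v p 0 - 1)) atTop
          (nhds (Real.log (64 / (8 + s ^ 2) ^ 2))) := by
        refine ht.congr' ?_
        filter_upwards [eventually_gt_atTop (1:ℝ)] with p hp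
        have hv0 := hpos p hp 0 (by simp)
        field_simp
      have hexp := Real.tendsto_one_add_rpow_exp_of_tendsto hpt
      rw [Real.exp_log (by positivity)] at hexp
      have hone : Tendsto (fun p => v p (ε p * s) / v p 0) atTop (nhds 1) := by
        have := (hpt.mul tendsto_inv_atTop_zero).add_const 1
        rw [mul_zero, zero_add] at this
        refine this.congr' ?_
        filter_upwards [eventually_gt_atTop (1:ℝ)] with p hp
        field_simp; ring
      have := hexp.div hone one_ne_zero
      rw [div_one] at this
      refine this.congr' ?_
      filter_upwards [eventually_gt_atTop (1:ℝ), hsmall] with p hp hpb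
      have hv0 := hpos p hp 0 (by simp)
      have hvs := hpos p hp _ (hsc p hp hpb s hs')
      have hr : 0 < v p (ε p * s) / v p 0 := by positivity
      rw [Pi.div_apply, add_sub_cancel, rpow_sub_one hr.ne']
  have hlim2 := ((tendsto_const_nhds (x := ∫ t in a..b, t * deriv φ t ^ 2)).sub hlim).div_const D
  have hlt : ((∫ t in a..b, t * deriv φ t ^ 2) -
      ∫ t in a..b, t * (64 / (8 + t ^ 2) ^ 2) * φ t ^ 2) / D < c := by
    rw [div_lt_iff₀ hD]
    nlinarith
  filter_upwards [eventually_gt_atTop (1:ℝ), hsmall, hlim2.eventually_lt_const hlt]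
    with p hp hpb hlast
  refine lt_of_le_of_lt ?_ hlast
  have he := hεpos p hp
  have hv0 := hpos p hp 0 (by simp)
  have hbdd : BddBelow {x : ℝ | ∃ φ : ℝ → ℝ,
      ContDiff ℝ (⊤ : ℕ∞) φ ∧ tsupport φ ⊆ Ioo (0:ℝ) 1 ∧ φ ≠ 0 ∧
      x = ((∫ t in Ioo (0:ℝ) 1, t * deriv φ t ^ 2) -
            p * ∫ t in Ioo (0:ℝ) 1, t * |v p t| ^ (p - 1) * φ t ^ 2) /
          (∫ t in Ioo (0:ℝ) 1, φ t ^ 2 / t)} := by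
    by_contra h
    have h1 := hν p
    rw [Real.sInf_of_not_bddBelow h] at h1
    linarith [(hbound p hp).2]
  rw [hν p]
  apply csInf_le hbdd
  have hz0 : ∀ t, t ≤ ε p * a → φ ((ε p)⁻¹ * t) = 0 := fun t ht => by
    apply hφ0
    rw [inv_mul_le_iff₀ he]; exact ht
  have hz1 : ∀ t, ε p * b ≤ t → φ ((ε p)⁻¹ * t) = 0 := fun t ht => by
    apply hφ1
    rw [le_inv_mul_iff₀ he]; exact ht
  -- derivative of φ vanishes outside
  have hd0 : ∀ t, t ≤ a → deriv φ t = 0 := by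
    have hop : ∀ t, t < a → deriv φ t = 0 := fun t ht => by
      have : φ =ᶠ[nhds t] fun _ => 0 := by
        filter_upwards [Iio_mem_nhds ht] with x hx using hφ0 x hx.le
      rw [this.deriv_eq]; simp
    have cd : Continuous (deriv φ) := hφs.continuous_deriv (by norm_cast)
    have hcl : IsClosed {t | deriv φ t = 0} := isClosed_eq cd continuous_const
    intro t ht
    have : closure (Iio a) ⊆ {t | deriv φ t = 0} := hcl.closure_subset_iff.2 hop
    rw [closure_Iio] at this
    exact this ht
  have hd1 : ∀ t, b ≤ t → deriv φ t = 0 := by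
    have hop : ∀ t, b < t → deriv φ t = 0 := fun t ht => by
      have : φ =ᶠ[nhds t] fun _ => 0 := by
        filter_upwards [Ioi_mem_nhds ht] with x hx using hφ1 x (le_of_lt hx)
      rw [this.deriv_eq]; simp
    have cd : Continuous (deriv φ) := hφs.continuous_deriv (by norm_cast)
    have hcl : IsClosed {t | deriv φ t = 0} := isClosed_eq cd continuous_const
    intro t ht
    have : closure (Ioi b) ⊆ {t | deriv φ t = 0} := hcl.closure_subset_iff.2 hop
    rw [closure_Ioi] at this
    exact this ht
  have hder : ∀ t, deriv (fun t => φ ((ε p)⁻¹ * t)) t = (ε p)⁻¹ * deriv φ ((ε p)⁻¹ * t) := fun t =>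
    deriv_comp_mul_left _ _ _
  refine ⟨fun t => φ ((ε p)⁻¹ * t), hφs.comp (by fun_prop), ?_, ?_, ?_⟩
  · have : tsupport (fun t => φ ((ε p)⁻¹ * t)) ⊆ Icc (ε p * a) (ε p * b) := by
      apply closure_minimal _ isClosed_Icc
      intro t ht
      rw [Function.mem_support] at ht
      refine ⟨?_, ?_⟩
      · by_contra h; exact ht (hz0 t (by linarith))
      · by_contra h; exact ht (hz1 t (by linarith))
    refine this.trans fun t ht => ⟨?_, lt_of_le_of_lt ht.2 hpb⟩
    have : 0 < ε p * a := by positivity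
    exact this.trans_le ht.1
  · intro h
    have hz : ∀ s, φ s = 0 := fun s => by
      have := congrFun h (ε p * s)
      simpa [he.ne'] using this
    rw [hDdef] at hD
    simp [hz] at hD
  · have hc : ∀ s, (ε p)⁻¹ * (ε p * s) = s := fun s => by field_simp
    have k1 : ∫ t in Ioo (0:ℝ) 1, t * deriv (fun t => φ ((ε p)⁻¹ * t)) t ^ 2
        = ∫ t in a..b, t * deriv φ t ^ 2 := by
      rw [scale_integral he ha hab hpb, ← intervalIntegral.integral_const_mul]
      · congr 1; ext s
        rw [hder, hc]; field_simp
      · intro t ht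
        rw [hder, hd0 _ (by rw [inv_mul_le_iff₀ he]; exact ht)]; ring
      · intro t ht
        rw [hder, hd1 _ (by rw [le_inv_mul_iff₀ he]; exact ht)]; ring
    have k2 : p * ∫ t in Ioo (0:ℝ) 1, t * |v p t| ^ (p - 1) * φ ((ε p)⁻¹ * t) ^ 2
        = ∫ s in a..b, s * (v p (ε p * s) / v p 0) ^ (p - 1) * φ s ^ 2 := by
      rw [scale_integral he ha hab hpb, ← intervalIntegral.integral_const_mul,
        ← intervalIntegral.integral_const_mul]
      · apply intervalIntegral.integral_congr
        intro s hs
        rw [uIcc_of_le hab.le] at hs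
        have hvs := hpos p hp _ (hsc p hp hpb s hs)
        have hsq := hεsq p hp
        have hvp : 0 < v p 0 ^ (p - 1) := by positivity
        simp only [hc]
        rw [abs_of_pos hvs, div_rpow hvs.le hv0.le]
        have : p * ε p ^ 2 = 1 / v p 0 ^ (p - 1) := by
          rw [eq_div_iff hvp.ne']; linarith
        calc _ = (p * ε p ^ 2) * (s * v p (ε p * s) ^ (p - 1) * φ s ^ 2) := by ring
          _ = _ := by rw [this]; ring
      · intro t ht; rw [hz0 t ht]; ring
      · intro t ht; rw [hz1 t ht]; ring
    have k3 : ∫ t in Ioo (0:ℝ) 1, φ ((ε p)⁻¹ * t) ^ 2 / t = D := by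
      rw [scale_integral he ha hab hpb, ← intervalIntegral.integral_const_mul]
      · rw [hDdef]; congr 1; ext s
        rw [hc]; field_simp
      · intro t ht; rw [hz0 t ht]; ring
      · intro t ht; rw [hz1 t ht]; ring
    rw [k1, k2, k3]
end

section
/- Define η₁(r) := 4r/(8+r²) for r > 0. Then: (i) (r·η₁′(r))′ + r·( 64/(8+r²)² − 1/r² )·η₁(r) = 0 for all r > 0; (ii) ∫₀^∞ r^{−1}·η₁(r)² dr = 1; (iii) ∫₀^∞ r·η₁′(r)² dr < ∞. (Thus η₁ is a normalized eigenfunction of the limit singular eigenvalue problem −(rη′)′ = r(W¹ + β/r²)η, W¹(r) = 64/(8+r²)², corresponding to the eigenvalue β = −1.) -/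
open Real Set Filter MeasureTheory

/-- The function `η₁(r) = 4r/(8+r²)` is a normalized eigenfunction of
the limit singular eigenvalue problem `−(rη′)′ = r(W¹ + β/r²)η`, `W¹(r) = 64/(8+r²)²`,
corresponding to `β = −1`: it solves the equation, has `∫₀^∞ η₁²/r dr = 1` and finite
weighted Dirichlet energy. -/
theorem limit_problem_first_eigenfunction
    (η₁ : ℝ → ℝ) (hη₁ : ∀ r : ℝ, η₁ r = 4 * r / (8 + r ^ 2)) :
    (∀ r > (0:ℝ),
      deriv (fun x => x * deriv η₁ x) r +
        r * (64 / (8 + r ^ 2) ^ 2 - 1 / r ^ 2) * η₁ r = 0) ∧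
    (∫ r in Ioi (0:ℝ), η₁ r ^ 2 / r) = 1 ∧
    IntegrableOn (fun r => r * deriv η₁ r ^ 2) (Ioi 0) := by
  have hη : η₁ = fun r => 4 * r / (8 + r ^ 2) := funext hη₁
  have hpos : ∀ r : ℝ, 0 < 8 + r ^ 2 := fun r => by positivity
  have hden : ∀ r : ℝ, HasDerivAt (fun x : ℝ => 8 + x ^ 2) (2 * r) r := fun r => by
    simpa using (hasDerivAt_pow 2 r).const_add 8
  have hd : ∀ r : ℝ, deriv η₁ r = (32 - 4 * r ^ 2) / (8 + r ^ 2) ^ 2 := fun r => by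
    have h1 : HasDerivAt (fun x : ℝ => 4 * x) 4 r := by
      simpa using (hasDerivAt_id r).const_mul 4
    have h := (h1.fun_div (hden r) (hpos r).ne').deriv
    rw [hη, h]
    congr 1
    ring
  have hF : ∀ r : ℝ, HasDerivAt (fun x : ℝ => (-8) / (8 + x ^ 2))
      (16 * r / (8 + r ^ 2) ^ 2) r := fun r => by
    have h := (hasDerivAt_const r (-8 : ℝ)).fun_div (hden r) (hpos r).ne'
    exact h.congr_deriv (by ring)
  have hlim : Tendsto (fun x : ℝ => (-8) / (8 + x ^ 2)) atTop (nhds 0) := by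
    apply Tendsto.const_div_atTop
    exact tendsto_atTop_add_const_left _ _ (tendsto_pow_atTop two_ne_zero)
  have hnn : ∀ r ∈ Ioi (0:ℝ), 0 ≤ 16 * r / (8 + r ^ 2) ^ 2 := fun r hr => by
    have : 0 < r := hr
    positivity
  refine ⟨fun r hr => ?_, ?_, ?_⟩
  · have hfun : (fun x => x * deriv η₁ x)
        = fun x => (32 * x - 4 * x ^ 3) / (8 + x ^ 2) ^ 2 := by
      funext x
      rw [hd]
      ring
    have hn : HasDerivAt (fun x : ℝ => 32 * x - 4 * x ^ 3) (32 - 12 * r ^ 2) r := by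
      have h := ((hasDerivAt_id r).const_mul 32).fun_sub ((hasDerivAt_pow 3 r).const_mul 4)
      exact h.congr_deriv (by norm_num; ring)
    have h := (hn.fun_div ((hden r).fun_pow 2) (pow_ne_zero 2 (hpos r).ne')).deriv
    rw [hfun, h, hη₁]
    have := (hpos r).ne'
    have := hr.ne'
    field_simp
    norm_num
    ring
  · have h := integral_Ioi_of_hasDerivAt_of_nonneg' (fun x _ => hF x) hnn hlim
    have e : ∫ r in Ioi (0:ℝ), η₁ r ^ 2 / r = ∫ r in Ioi (0:ℝ), 16 * r / (8 + r ^ 2) ^ 2 := by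
      refine setIntegral_congr_fun measurableSet_Ioi fun r hr => ?_
      have h0 : r ≠ 0 := ne_of_gt hr
      have := (hpos r).ne'
      simp only [hη₁]
      field_simp
      norm_num
    rw [e, h]
    norm_num
  · have h := integrableOn_Ioi_deriv_of_nonneg' (fun x _ => hF x) hnn hlim
    refine Integrable.mono' h ?_ ?_
    · exact (measurable_id.mul ((measurable_deriv η₁).pow_const 2)).aestronglyMeasurable
    · refine (ae_restrict_iff' measurableSet_Ioi).2 (Eventually.of_forall fun r hr => ?_)
      have h0 : 0 < r := hr
      have hp := hpos r
      rw [hd, Real.norm_of_nonneg (by positivity)]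
      have e : r * ((32 - 4 * r ^ 2) / (8 + r ^ 2) ^ 2) ^ 2
          = 16 * r / (8 + r ^ 2) ^ 2 * ((8 - r ^ 2) / (8 + r ^ 2)) ^ 2 := by
        field_simp
        ring
      rw [e]
      apply mul_le_of_le_one_right (hnn r hr)
      rw [div_pow, div_le_one (by positivity)]
      nlinarith [sq_nonneg r]
end

section
/- Let β < 0 and let η : (0,∞) → ℝ be twice continuously differentiable, not identically zero, with ∫₀^∞ ( r·η′(r)² + r^{−1}·η(r)² ) dr < ∞, and satisfying (r·η′(r))′ + r·( 64/(8+r²)² + β/r² )·η(r) = 0 for all r > 0. Then β = −1 and there exists c ∈ ℝ with η(r) = c·4r/(8+r²) for all r > 0. (Thus β = −1 is the only negative eigenvalue of the limit problem and it is simple.) -/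
open Real Set Filter MeasureTheory

lemma aux_tendsto {l : Filter ℝ} {f : ℝ → ℝ} (hf : Tendsto f l atTop) (A B : ℝ) (hA : A ≠ 0) :
    ∀ᶠ r in l, 1 ≤ (A * f r + B * (f r)⁻¹) ^ 2 := by
  have h1 : Tendsto (fun r => (f r)⁻¹) l (nhds 0) := tendsto_inv_atTop_zero.comp hf
  have h2 : Tendsto (fun r => (A + B * ((f r)⁻¹) ^ 2) ^ 2) l (nhds (A ^ 2)) := by
    have := ((h1.pow 2).const_mul B).const_add A |>.pow 2
    simpa using this
  have h3 : Tendsto (fun r => (f r) ^ 2) l atTop := (tendsto_pow_atTop (by norm_num)).comp hf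
  have h4 := h3.atTop_mul_pos (by positivity : 0 < A ^ 2) h2
  filter_upwards [h4.eventually_ge_atTop 1, hf.eventually_gt_atTop 0] with r hr hp
  have : (A * f r + B * (f r)⁻¹) ^ 2 = f r ^ 2 * (A + B * ((f r)⁻¹) ^ 2) ^ 2 := by
    field_simp
  rw [this]; exact hr

lemma aux_const (p : ℝ → ℝ) (k : ℝ) (hp : ∀ r > (0:ℝ), HasDerivAt p (k * p r / r) r) :
    ∃ a : ℝ, ∀ r > (0:ℝ), p r = a * r ^ k := by
  have hd : ∀ r > (0:ℝ), HasDerivAt (fun x => p x * x ^ (-k)) 0 r := by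
    intro r hr
    have h := (hp r hr).mul (Real.hasDerivAt_rpow_const (p := -k) (Or.inl hr.ne'))
    have hh := h
    refine hh.congr_deriv ?_
    rw [Real.rpow_sub hr, Real.rpow_one]
    field_simp
    ring
  refine ⟨p 1, fun r hr => ?_⟩
  have := isOpen_Ioi.is_const_of_deriv_eq_zero (convex_Ioi (0:ℝ)).isPreconnected
    (fun x hx => (hd x hx).differentiableAt.differentiableWithinAt)
    (fun x hx => (hd x hx).deriv) (mem_Ioi.2 hr) (mem_Ioi.2 (one_pos : (0:ℝ) < 1))
  simp only [Real.one_rpow, mul_one] at this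
  rw [← this, mul_assoc, ← Real.rpow_add hr]
  simp

lemma aux_zero (w v : ℝ → ℝ) (k : ℝ) (hk : 0 < k)
    (hw : ∀ r > (0:ℝ), HasDerivAt w (v r / r) r)
    (hv : ∀ r > (0:ℝ), HasDerivAt v (k ^ 2 * w r / r) r)
    (hint : IntegrableOn (fun r => w r ^ 2 / r) (Ioi 0)) : ∀ r > (0:ℝ), w r = 0 := by
  obtain ⟨a, ha⟩ := aux_const (fun r => v r + k * w r) k (fun r hr => by
    have hh := (hv r hr).add ((hw r hr).const_mul k)
    refine hh.congr_deriv ?_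
    ring)
  obtain ⟨b, hb⟩ := aux_const (fun r => v r - k * w r) (-k) (fun r hr => by
    have hh := (hv r hr).sub ((hw r hr).const_mul k)
    refine hh.congr_deriv ?_
    ring)
  have hform : ∀ r > (0:ℝ), w r = (a / (2 * k)) * r ^ k + (-b / (2 * k)) * r ^ (-k) := by
    intro r hr
    have h1 := ha r hr
    have h2 := hb r hr
    field_simp
    linarith
  have hA : a / (2 * k) = 0 := by
    by_contra hA
    have h := aux_tendsto (tendsto_rpow_atTop hk) (a / (2 * k)) (-b / (2 * k)) hA
    obtain ⟨M, hM⟩ := (h.and (eventually_gt_atTop 0)).exists_forall_of_atTop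
    have hM0 : 0 < M := (hM M le_rfl).2
    apply not_integrableOn_Ioi_inv (a := M)
    refine Integrable.mono' (hint.mono_set (Ioi_subset_Ioi hM0.le))
      measurable_inv.aestronglyMeasurable ?_
    refine (ae_restrict_iff' measurableSet_Ioi).2 (Eventually.of_forall fun r hr => ?_)
    obtain ⟨h1, h2⟩ := hM r (le_of_lt hr)
    rw [Real.norm_of_nonneg (by positivity), hform r h2, Real.rpow_neg h2.le, inv_eq_one_div]
    gcongr
  have hB : -b / (2 * k) = 0 := by
    by_contra hB
    have ht : Tendsto (fun r : ℝ => r ^ (-k)) (nhdsWithin 0 (Ioi 0)) atTop :=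
      tendsto_rpow_neg_nhdsGT_zero (by linarith)
    have h := aux_tendsto ht (-b / (2 * k)) (a / (2 * k)) hB
    obtain ⟨M, hM0, hM⟩ := mem_nhdsGT_iff_exists_Ioc_subset.1 h
    have hM0' : 0 < M := hM0
    have : IntervalIntegrable (fun r : ℝ => r⁻¹) volume 0 M := by
      rw [intervalIntegrable_iff_integrableOn_Ioc_of_le hM0'.le]
      refine Integrable.mono' (hint.mono_set Ioc_subset_Ioi_self)
        measurable_inv.aestronglyMeasurable ?_
      refine (ae_restrict_iff' measurableSet_Ioc).2 (Eventually.of_forall fun r hr => ?_)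
      have h1 := hM hr
      have h2 : 0 < r := hr.1
      simp only [mem_ofPred_eq] at h1
      rw [Real.norm_of_nonneg (by positivity), hform r h2, inv_eq_one_div]
      rw [← Real.rpow_neg h2.le, neg_neg, add_comm] at h1
      gcongr
    rw [intervalIntegrable_inv_iff] at this
    rcases this with h | h
    · exact hM0'.ne h
    · exact h left_mem_uIcc
  intro r hr
  rw [hform r hr, hA, hB]; simp

/-- `β = −1` is the only negative eigenvalue of the limit singular
problem `−(rη′)′ = r(64/(8+r²)² + β/r²)η` on `(0,∞)` with finite weighted energy, and
it is simple: any such eigenfunction is a multiple of `4r/(8+r²)`. -/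
theorem limit_problem_unique_negative_eigenvalue
    (β : ℝ) (hβ : β < 0) (η : ℝ → ℝ)
    (hreg : ContDiffOn ℝ 2 η (Ioi 0))
    (hne : ∃ r > (0:ℝ), η r ≠ 0)
    (hint : IntegrableOn (fun r => r * deriv η r ^ 2 + η r ^ 2 / r) (Ioi 0))
    (heq : ∀ r > (0:ℝ),
      deriv (fun x => x * deriv η x) r +
        r * (64 / (8 + r ^ 2) ^ 2 + β / r ^ 2) * η r = 0) :
    β = -1 ∧ ∃ c : ℝ, ∀ r > (0:ℝ), η r = c * (4 * r / (8 + r ^ 2)) := by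
  have hd : ∀ r > (0:ℝ), HasDerivAt η (deriv η r) r := fun r hr =>
    ((hreg.differentiableOn (by norm_num)).differentiableAt (Ioi_mem_nhds hr)).hasDerivAt
  have hreg1 : ContDiffOn ℝ 1 (deriv η) (Ioi 0) :=
    hreg.deriv_of_isOpen isOpen_Ioi (by norm_num)
  have hd1 : ∀ r > (0:ℝ), HasDerivAt (fun x => x * deriv η x)
      (-(r * (64 / (8 + r ^ 2) ^ 2 + β / r ^ 2) * η r)) r := by
    intro r hr
    have h : DifferentiableAt ℝ (fun x => x * deriv η x) r :=
      differentiableAt_id.mul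
        ((hreg1.differentiableOn (by norm_num)).differentiableAt (Ioi_mem_nhds hr))
    have h2 := h.hasDerivAt
    rwa [eq_neg_of_add_eq_zero_left (heq r hr)] at h2
  have hpos : ∀ r : ℝ, (8 + r ^ 2) ≠ 0 := fun r => by positivity
  have hq : ∀ r : ℝ, HasDerivAt (fun x : ℝ => 8 + x ^ 2) (2 * r) r := fun r => by
    simpa using (hasDerivAt_pow 2 r).const_add 8
  have hT : ∀ r : ℝ, HasDerivAt (fun x : ℝ => (x ^ 2 - 8) / (8 + x ^ 2))
      (32 * r / (8 + r ^ 2) ^ 2) r := fun r => by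
    have h : HasDerivAt (fun x : ℝ => x ^ 2 - 8) (2 * r) r := by
      simpa using (hasDerivAt_pow 2 r).sub_const 8
    have hh := h.div (hq r) (hpos r)
    refine hh.congr_deriv ?_
    ring
  have hS : ∀ r : ℝ, HasDerivAt (fun x : ℝ => -(32 * x ^ 2 / (8 + x ^ 2) ^ 2) - β)
      (64 * r * (r ^ 2 - 8) / (8 + r ^ 2) ^ 3) r := fun r => by
    have h : HasDerivAt (fun x : ℝ => 32 * x ^ 2) (32 * (2 * r)) r := by
      simpa using (hasDerivAt_pow 2 r).const_mul 32
    have hh := ((h.div ((hq r).pow 2) (pow_ne_zero 2 (hpos r))).neg).sub_const β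
    refine hh.congr_deriv ?_
    have := hpos r
    simp only [Pi.pow_apply]
    field_simp
    ring
  set w : ℝ → ℝ := fun x => x * deriv η x + (x ^ 2 - 8) / (8 + x ^ 2) * η x with hwdef
  set v : ℝ → ℝ := fun x => (x ^ 2 - 8) / (8 + x ^ 2) * (x * deriv η x)
    + (-(32 * x ^ 2 / (8 + x ^ 2) ^ 2) - β) * η x with hvdef
  have hw : ∀ r > (0:ℝ), HasDerivAt w (v r / r) r := by
    intro r hr
    have hh := (hd1 r hr).add ((hT r).mul (hd r hr))
    refine hh.congr_deriv ?_
    have := hpos r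
    simp only [hvdef]
    field_simp
    ring
  have hv : ∀ r > (0:ℝ), HasDerivAt v ((√(-β)) ^ 2 * w r / r) r := by
    intro r hr
    rw [Real.sq_sqrt (by linarith)]
    have hh := ((hT r).mul (hd1 r hr)).add ((hS r).mul (hd r hr))
    refine hh.congr_deriv ?_
    have := hpos r
    simp only [hwdef]
    field_simp
    ring
  have hTle : ∀ r : ℝ, ((r ^ 2 - 8) / (8 + r ^ 2)) ^ 2 ≤ 1 := fun r => by
    rw [div_pow, div_le_one (by positivity)]
    nlinarith [sq_nonneg r]
  have hwint : IntegrableOn (fun r => w r ^ 2 / r) (Ioi 0) := by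
    have hc : ContinuousOn (fun r => w r ^ 2 / r) (Ioi 0) := by
      refine ContinuousOn.div (ContinuousOn.pow ?_ 2) continuousOn_id (fun x hx => ne_of_gt hx)
      exact fun x hx => (hw x hx).continuousAt.continuousWithinAt
    refine Integrable.mono' (hint.const_mul 2) (hc.aestronglyMeasurable measurableSet_Ioi) ?_
    refine (ae_restrict_iff' measurableSet_Ioi).2 (Eventually.of_forall fun r hr => ?_)
    have hr : 0 < r := hr
    rw [Real.norm_of_nonneg (by positivity), div_le_iff₀ hr]
    have e : 2 * (r * deriv η r ^ 2 + η r ^ 2 / r) * r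
        = 2 * ((r * deriv η r) ^ 2 + η r ^ 2) := by field_simp
    rw [e]
    simp only [hwdef]
    have := mul_le_mul_of_nonneg_right (hTle r) (sq_nonneg (η r))
    nlinarith [sq_nonneg (r * deriv η r - (r ^ 2 - 8) / (8 + r ^ 2) * η r)]
  have hw0 := aux_zero w v (√(-β)) (Real.sqrt_pos.2 (by linarith)) hw hv hwint
  have hv0 : ∀ r > (0:ℝ), v r = 0 := by
    intro r hr
    have h0 : HasDerivAt w 0 r :=
      (hasDerivAt_const r (0:ℝ)).congr_of_eventuallyEq
        (by filter_upwards [Ioi_mem_nhds hr] with x hx using hw0 x hx)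
    have := (hw r hr).unique h0
    simpa [hr.ne'] using this
  constructor
  · obtain ⟨r, hr, hη⟩ := hne
    have h1 := hw0 r hr
    have h2 := hv0 r hr
    simp only [hwdef] at h1
    simp only [hvdef] at h2
    rw [eq_neg_of_add_eq_zero_left h1] at h2
    have h3 : (-1 - β) * η r = 0 := by
      rw [← h2]
      have := hpos r
      field_simp
      ring
    have := (mul_eq_zero.1 h3).resolve_right hη
    linarith
  · have hg : ∀ r > (0:ℝ), HasDerivAt (fun x => η x * ((8 + x ^ 2) / x)) 0 r := by
      intro r hr
      have hh := (hd r hr).mul ((hq r).div (hasDerivAt_id r) hr.ne')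
      refine hh.congr_deriv ?_
      have h1 := hw0 r hr
      simp only [hwdef] at h1
      have h4 : deriv η r = -((r ^ 2 - 8) / (8 + r ^ 2) * η r) / r := by
        rw [eq_div_iff hr.ne']; linarith
      rw [h4]
      have := hpos r
      simp only [Pi.div_apply, id]
      field_simp
      ring
    refine ⟨η 1 * 9 / 4, fun r hr => ?_⟩
    have := isOpen_Ioi.is_const_of_deriv_eq_zero (convex_Ioi (0:ℝ)).isPreconnected
      (fun x hx => (hg x hx).differentiableAt.differentiableWithinAt)
      (fun x hx => (hg x hx).deriv) (mem_Ioi.2 hr) (mem_Ioi.2 (one_pos : (0:ℝ) < 1))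
    norm_num at this
    have h8 := hpos r
    rw [← this]
    field_simp
end

section
/- Let κ > 0 and δ > 0, and set W(r) := 8κ²·δ·r^{2κ−2}/(δ + r^{2κ})² and η(r) := r^κ/(δ + r^{2κ}). Then: (i) (r·η′(r))′ + r·( W(r) − κ²/r² )·η(r) = 0 for all r > 0; (ii) if β < 0 and ψ : (0,∞) → ℝ is twice continuously differentiable, not identically zero, with ∫₀^∞ ( r·ψ′(r)² + r^{−1}·ψ(r)² ) dr < ∞, and (r·ψ′(r))′ + r·( W(r) + β/r² )·ψ(r) = 0 for all r > 0, then β = −κ² and ψ is a scalar multiple of η. (Thus β = −κ² is the only negative eigenvalue of the singular limit problem and it is simple.) -/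
open Real Set Filter MeasureTheory

lemma aux_const_s18 {f : ℝ → ℝ} (h : ∀ x > (0:ℝ), HasDerivAt f 0 x) :
    ∀ x > (0:ℝ), f x = f 1 := by
  intro x hx
  refine (isOpen_Ioi (a := (0:ℝ))).is_const_of_deriv_eq_zero isPreconnected_Ioi
    (fun y hy => (h y hy).differentiableAt.differentiableWithinAt)
    (fun y hy => (h y hy).deriv) hx (by simp)

lemma aux_rpow (a : ℝ) {x : ℝ} (hx : 0 < x) :
    HasDerivAt (fun y : ℝ => y ^ a) (a * x ^ a / x) x := by
  have := Real.hasDerivAt_rpow_const (x := x) (p := a) (Or.inl hx.ne')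
  rwa [Real.rpow_sub_one hx.ne', ← mul_div_assoc] at this

/-- the logarithmic derivative profile -/
noncomputable def auxG (κ δ x : ℝ) : ℝ := (x ^ (2 * κ) - δ) / (x ^ (2 * κ) + δ)

lemma auxG_deriv {κ δ : ℝ} (hδ : 0 < δ) {x : ℝ} (hx : 0 < x) :
    HasDerivAt (auxG κ δ) (κ * (1 - auxG κ δ x ^ 2) / x) x := by
  have hq : 0 < x ^ (2 * κ) := Real.rpow_pos_of_pos hx _
  have h1 := aux_rpow (2 * κ) hx
  have h2 := (h1.sub_const δ).div (h1.add_const δ) (by positivity)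
  refine h2.congr_deriv ?_
  unfold auxG
  field_simp
  ring

lemma auxG_sq {κ δ : ℝ} (hδ : 0 < δ) {x : ℝ} (hx : 0 < x) : auxG κ δ x ^ 2 ≤ 1 := by
  have hq : 0 < x ^ (2 * κ) := Real.rpow_pos_of_pos hx _
  unfold auxG
  rw [div_pow, div_le_one (by positivity)]
  nlinarith [mul_pos hq hδ]

lemma auxW {κ δ : ℝ} (hδ : 0 < δ) {x : ℝ} (hx : 0 < x) :
    8 * κ ^ 2 * δ * x ^ (2 * κ - 2) / (δ + x ^ (2 * κ)) ^ 2
      = 2 * κ ^ 2 * (1 - auxG κ δ x ^ 2) / x ^ 2 := by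
  have hq : 0 < x ^ (2 * κ) := Real.rpow_pos_of_pos hx _
  have : x ^ (2 * κ - 2) = x ^ (2 * κ) / x ^ 2 := by
    rw [Real.rpow_sub hx]; norm_num
  rw [this]
  unfold auxG
  field_simp
  ring

lemma auxEta {κ δ : ℝ} (hδ : 0 < δ) {x : ℝ} (hx : 0 < x) :
    HasDerivAt (fun r : ℝ => r ^ κ / (δ + r ^ (2 * κ)))
      (-κ * auxG κ δ x * (x ^ κ / (δ + x ^ (2 * κ))) / x) x := by
  have hq : 0 < x ^ (2 * κ) := Real.rpow_pos_of_pos hx _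
  have h2 := (aux_rpow κ hx).div ((aux_rpow (2 * κ) hx).const_add δ) (by positivity)
  refine h2.congr_deriv ?_
  unfold auxG
  field_simp
  ring

/-- An Euler-type system with finite energy has only the trivial solution. -/
lemma aux_euler {μ : ℝ} (hμ : 0 < μ) {v w : ℝ → ℝ}
    (hv : ∀ x > (0:ℝ), HasDerivAt v (w x / x) x)
    (hw : ∀ x > (0:ℝ), HasDerivAt w (μ ^ 2 * v x / x) x)
    (hi : IntegrableOn (fun x => v x ^ 2 / x) (Ioi 0)) :
    ∀ x > (0:ℝ), v x = 0 := by
  have hC := aux_const_s18 (f := fun x => (w x + μ * v x) * x ^ (-μ)) (by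
    intro x hx
    refine (((hw x hx).add ((hv x hx).const_mul μ)).mul (aux_rpow (-μ) hx)).congr_deriv ?_
    simp only [Pi.add_apply]
    field_simp
    ring)
  have hD := aux_const_s18 (f := fun x => (w x - μ * v x) * x ^ μ) (by
    intro x hx
    refine (((hw x hx).sub ((hv x hx).const_mul μ)).mul (aux_rpow μ hx)).congr_deriv ?_
    simp only [Pi.sub_apply]
    field_simp
    ring)
  simp only [Real.one_rpow, mul_one] at hC hD
  obtain ⟨C, hCe⟩ : ∃ C, C = (w 1 + μ * v 1) / (2 * μ) := ⟨_, rfl⟩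
  obtain ⟨D, hDe⟩ : ∃ D, D = -(w 1 - μ * v 1) / (2 * μ) := ⟨_, rfl⟩
  have hvf : ∀ x > (0:ℝ), v x = C * x ^ μ + D * x ^ (-μ) := by
    intro x hx
    have hp : 0 < x ^ μ := Real.rpow_pos_of_pos hx _
    have h1 := hC x hx
    have h2 := hD x hx
    rw [hCe, hDe, ← h1, ← h2, Real.rpow_neg hx.le]
    field_simp
    ring
  have hC0 : C = 0 := by
    by_contra hne
    have t1 : Tendsto (fun x : ℝ => |C| * x ^ μ - |D|) atTop atTop :=
      tendsto_atTop_add_const_right _ _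
        ((tendsto_rpow_atTop hμ).const_mul_atTop (abs_pos.mpr hne))
    obtain ⟨a, ha⟩ := (((t1.eventually_ge_atTop 1).and (eventually_ge_atTop 1))).exists_forall_of_atTop
    have h1 : IntegrableOn (fun x : ℝ => x⁻¹) (Ioi (max a 1)) := by
      refine Integrable.mono' (hi.mono_set (Ioi_subset_Ioi (by simp))) ?_ ?_
      · exact measurable_inv.aestronglyMeasurable
      · refine (ae_restrict_iff' measurableSet_Ioi).2 (ae_of_all _ fun x hx => ?_)
        obtain ⟨hxa, hx1⟩ := max_lt_iff.1 (mem_Ioi.1 hx)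
        have hx0 : 0 < x := by linarith
        have h3 := (ha x hxa.le).1
        have hneg : x ^ (-μ) ≤ 1 := Real.rpow_le_one_of_one_le_of_nonpos hx1.le (by linarith)
        have hneg0 : 0 < x ^ (-μ) := Real.rpow_pos_of_pos hx0 _
        have hp : 0 < x ^ μ := Real.rpow_pos_of_pos hx0 _
        have h4 : 1 ≤ |v x| := by
          rw [hvf x hx0]
          have h5 := abs_sub_abs_le_abs_sub (C * x ^ μ) (-(D * x ^ (-μ)))
          rw [abs_neg, abs_mul, abs_mul, abs_of_pos hp, abs_of_pos hneg0, sub_neg_eq_add] at h5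
          nlinarith [abs_nonneg D]
        have h6 : 1 ≤ v x ^ 2 := by rw [← sq_abs]; nlinarith
        rw [Real.norm_of_nonneg (by positivity), inv_eq_one_div]
        gcongr
    exact not_integrableOn_Ioi_inv h1
  have hD0 : D = 0 := by
    by_contra hne
    have h1 : IntegrableOn (fun x : ℝ => x ^ (-2 * μ - 1)) (Ioi 0) := by
      refine IntegrableOn.congr_fun (hi.const_mul (D ^ 2)⁻¹) (fun x hx => ?_) measurableSet_Ioi
      have hx0 : (0:ℝ) < x := hx
      rw [hvf x hx0, hC0, Real.rpow_sub_one hx0.ne',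
        show -2 * μ = -μ + -μ by ring, Real.rpow_add hx0]
      field_simp
      ring
    exact not_integrableOn_Ioi_rpow _ h1
  intro x hx
  rw [hvf x hx, hC0, hD0]; ring


/-- For `κ, δ > 0` and `W(r) = 8κ²δ r^{2κ−2}/(δ+r^{2κ})²`, the function
`η(r) = r^κ/(δ+r^{2κ})` solves `−(rη′)′ = r(W − κ²/r²)η`, and `β = −κ²` is the only
negative eigenvalue of the singular limit problem with finite weighted energy; it is
simple. -/
theorem singular_limit_problem_unique_negative_eigenvalue
    (κ δ : ℝ) (hκ : 0 < κ) (hδ : 0 < δ)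
    (W η : ℝ → ℝ)
    (hW : ∀ r : ℝ, W r = 8 * κ ^ 2 * δ * r ^ (2 * κ - 2) / (δ + r ^ (2 * κ)) ^ 2)
    (hη : ∀ r : ℝ, η r = r ^ κ / (δ + r ^ (2 * κ))) :
    (∀ r > (0:ℝ),
      deriv (fun x => x * deriv η x) r + r * (W r - κ ^ 2 / r ^ 2) * η r = 0) ∧
    (∀ β : ℝ, β < 0 → ∀ ψ : ℝ → ℝ, ContDiffOn ℝ 2 ψ (Ioi 0) →
      (∃ r > (0:ℝ), ψ r ≠ 0) →
      IntegrableOn (fun r => r * deriv ψ r ^ 2 + ψ r ^ 2 / r) (Ioi 0) →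
      (∀ r > (0:ℝ),
        deriv (fun x => x * deriv ψ x) r + r * (W r + β / r ^ 2) * ψ r = 0) →
      β = -κ ^ 2 ∧ ∃ c : ℝ, ∀ r > (0:ℝ), ψ r = c * η r) := by
  obtain rfl : η = fun r => r ^ κ / (δ + r ^ (2 * κ)) := funext hη
  clear hη
  have hi : ∀ r > (0:ℝ),
      deriv (fun x => x * deriv (fun r : ℝ => r ^ κ / (δ + r ^ (2 * κ))) x) r
        + r * (W r - κ ^ 2 / r ^ 2) * (r ^ κ / (δ + r ^ (2 * κ))) = 0 := by
    intro r hr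
    have he : (fun x => x * deriv (fun r : ℝ => r ^ κ / (δ + r ^ (2 * κ))) x) =ᶠ[nhds r]
        fun x => -κ * (auxG κ δ x * (x ^ κ / (δ + x ^ (2 * κ)))) := by
      filter_upwards [Ioi_mem_nhds hr] with x hx
      have hx0 : (0:ℝ) < x := hx
      rw [(auxEta hδ hx0).deriv]
      field_simp
    have hdd := ((auxG_deriv (κ := κ) hδ hr).mul (auxEta (κ := κ) hδ hr)).const_mul (-κ)
    have hdd2 : deriv (fun x => -κ * (auxG κ δ x * (x ^ κ / (δ + x ^ (2 * κ))))) r = _ :=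
      hdd.deriv
    rw [he.deriv_eq, hdd2, hW, auxW hδ hr]
    generalize r ^ κ / (δ + r ^ (2 * κ)) = e
    generalize auxG κ δ r = g
    field_simp
    ring
  refine ⟨hi, ?_⟩
  intro β hβ ψ hψ hne hint hode
  have hd1 : ∀ x > (0:ℝ), HasDerivAt ψ (deriv ψ x) x := fun x hx =>
    ((hψ.differentiableOn (by norm_num)).differentiableAt (Ioi_mem_nhds hx)).hasDerivAt
  have hd2' : DifferentiableOn ℝ (deriv ψ) (Ioi 0) :=
    (hψ.deriv_of_isOpen (m := 1) isOpen_Ioi (by norm_num)).differentiableOn (by norm_num)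
  have hp : ∀ x > (0:ℝ), HasDerivAt (fun x => x * deriv ψ x)
      (-(2 * κ ^ 2 * (1 - auxG κ δ x ^ 2) + β) * ψ x / x) x := by
    intro x hx
    have h1 : DifferentiableAt ℝ (fun x => x * deriv ψ x) x :=
      differentiableAt_id.mul (hd2'.differentiableAt (Ioi_mem_nhds hx))
    refine h1.hasDerivAt.congr_deriv ?_
    have h2 := hode x hx
    rw [hW, auxW hδ hx] at h2
    rw [eq_neg_of_add_eq_zero_left h2]
    field_simp
  have hv : ∀ x > (0:ℝ), HasDerivAt (fun x => x * deriv ψ x + κ * (auxG κ δ x * ψ x))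
      ((-(κ ^ 2 + β) * ψ x + κ * (auxG κ δ x * (x * deriv ψ x + κ * (auxG κ δ x * ψ x)))) / x)
      x := by
    intro x hx
    refine ((hp x hx).add (((auxG_deriv hδ hx).mul (hd1 x hx)).const_mul κ)).congr_deriv ?_
    field_simp
    ring
  have hw : ∀ x > (0:ℝ), HasDerivAt (fun x => -(κ ^ 2 + β) * ψ x
        + κ * (auxG κ δ x * (x * deriv ψ x + κ * (auxG κ δ x * ψ x))))
      (√(-β) ^ 2 * (x * deriv ψ x + κ * (auxG κ δ x * ψ x)) / x) x := by
    intro x hx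
    refine (((hd1 x hx).const_mul (-(κ ^ 2 + β))).add
      (((auxG_deriv hδ hx).mul (hv x hx)).const_mul κ)).congr_deriv ?_
    rw [Real.sq_sqrt (by linarith)]
    field_simp
    ring
  have hv0 := aux_euler (Real.sqrt_pos.2 (by linarith : 0 < -β)) hv hw (by
    refine Integrable.mono' (hint.const_mul (2 + 2 * κ ^ 2)) ?_ ?_
    · refine ContinuousOn.aestronglyMeasurable (fun x hx => ?_) measurableSet_Ioi
      have hx0 : (0:ℝ) < x := hx
      exact (((hv x hx0).continuousAt.pow 2).div continuousAt_id hx0.ne').continuousWithinAt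
    · refine (ae_restrict_iff' measurableSet_Ioi).2 (ae_of_all _ fun x hx => ?_)
      have hx0 : (0:ℝ) < x := hx
      rw [Real.norm_of_nonneg (by positivity), div_le_iff₀ hx0]
      have hg := auxG_sq (κ := κ) hδ hx0
      have e : (2 + 2 * κ ^ 2) * (x * deriv ψ x ^ 2 + ψ x ^ 2 / x) * x
          = (2 + 2 * κ ^ 2) * ((x * deriv ψ x) ^ 2 + ψ x ^ 2) := by
        field_simp
      rw [e]
      generalize x * deriv ψ x = p
      generalize ψ x = y at *
      generalize auxG κ δ x = g at *
      have h1 : g ^ 2 * (κ * y) ^ 2 ≤ 1 * (κ * y) ^ 2 := by gcongr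
      nlinarith [sq_nonneg (p - κ * (g * y)), sq_nonneg y, sq_nonneg (κ * p)])
  have hconst := aux_const_s18 (f := fun x => ψ x / (x ^ κ / (δ + x ^ (2 * κ)))) (by
    intro x hx
    have hq : 0 < x ^ (2 * κ) := Real.rpow_pos_of_pos hx _
    have hk : 0 < x ^ κ := Real.rpow_pos_of_pos hx _
    have he : 0 < x ^ κ / (δ + x ^ (2 * κ)) := by positivity
    refine ((hd1 x hx).div (auxEta hδ hx) he.ne').congr_deriv ?_
    have h := hv0 x hx
    generalize x ^ κ / (δ + x ^ (2 * κ)) = e at *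
    rw [div_eq_zero_iff]
    left
    field_simp
    linear_combination e * h)
  obtain ⟨c, hc⟩ : ∃ c : ℝ, ∀ r > (0:ℝ), ψ r = c * (r ^ κ / (δ + r ^ (2 * κ))) := by
    refine ⟨ψ 1 / (1 ^ κ / (δ + 1 ^ (2 * κ))), fun r hr => ?_⟩
    have hq : 0 < r ^ (2 * κ) := Real.rpow_pos_of_pos hr _
    have hk : 0 < r ^ κ := Real.rpow_pos_of_pos hr _
    have he : 0 < r ^ κ / (δ + r ^ (2 * κ)) := by positivity
    exact (div_eq_iff he.ne').1 (hconst r hr)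
  refine ⟨?_, c, hc⟩
  obtain ⟨r, hr, hr0⟩ := hne
  -- compare the two derivative formulas for `w`
  have hw0 : (-(κ ^ 2 + β) * ψ r + κ * (auxG κ δ r * (r * deriv ψ r
      + κ * (auxG κ δ r * ψ r)))) / r = 0 := by
    have he : (fun x => x * deriv ψ x + κ * (auxG κ δ x * ψ x)) =ᶠ[nhds r] fun _ => 0 := by
      filter_upwards [Ioi_mem_nhds hr] with x hx
      exact hv0 x hx
    rw [← (hv r hr).deriv, he.deriv_eq, deriv_const]
  have h3 := hv0 r hr
  rw [h3, div_eq_zero_iff] at hw0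
  have h4 : (κ ^ 2 + β) * ψ r = 0 := by
    rcases hw0 with h | h
    · linarith
    · exact absurd h hr.ne'
  rcases mul_eq_zero.1 h4 with h | h
  · linarith
  · exact absurd h hr0
end
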